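/- arXiv:1502.02070 — 4 statements merged into one kernel-verified Lean document; each statement's English description precedes it below -/
import Mathlib

section
/- For every prime power q, there exists a finite set P of points in EuclideanSpace ℝ (Fin (q^3 - q^2 + q)) with pairwise distances at least 1, such that the unit-distance graph on P (joining two points exactly when their distance equals 1) is strongly regular with parameters ((q+1)(q^3+1), q^4, q(q-1)(q^2+1), (q-1)q^3) and has chromatic number exactly q^3 + 1. -/
open scoped Classical

/-- The unit-distance graph on a set of points in Euclidean space:
two points are adjacent exactly when their distance equals `1`. -/
def unitDistanceGraph {d : ℕ} (P : Set (EuclideanSpace ℝ (Fin d))) :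
    SimpleGraph P where
  Adj x y := dist (x : EuclideanSpace ℝ (Fin d)) (y : EuclideanSpace ℝ (Fin d)) = 1
  symm := by
    constructor
    intro x y h
    rwa [dist_comm]
  loopless := by
    constructor
    intro x h
    rw [dist_self] at h
    norm_num at h

/-!
The diagonal of the Hermitian form of the curve `H(2, q²)`, viewed over the subfield of order `q`,
is a quadratic form in six variables of Witt index two. The points and lines of its quadric form a
generalized quadrangle with `q + 1` points on a line and `q² + 1` lines through a point, and the
points of the Hermitian curve, viewed as lines over the small field, partition the points of the
quadric into `q³ + 1` lines.

These lines are the colour classes of a colouring of the complement of the collinearity graph. It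
is optimal because an independent set of the complement is a set of pairwise collinear points and
so has at most `q + 1` elements, the size of a line.

The packing is the image of the standard basis under the projection onto the eigenspace of the
collinearity graph for the eigenvalue `-(q² + 1)`, which has dimension `q³ - q² + q`; after
rescaling, non-collinear points are at distance `1` and collinear ones further apart.
-/

open Finset

section GeneralizedQuadrangle

variable {V C : Type*} {G : SimpleGraph V} {lines : Set (Finset V)} {s t : ℕ}

/-- `lines` are the lines, with `s + 1` points each, of a generalized quadrangle on the point set
`V` whose collinearity graph is `G`. The number `t + 1` of lines through a point is not part of the
structure: here it is always determined by a spread. -/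
structure IsGeneralizedQuadrangle (G : SimpleGraph V) (lines : Set (Finset V)) (s : ℕ) : Prop where
  card_line : ∀ ℓ ∈ lines, #ℓ = s + 1
  isClique_line : ∀ ℓ ∈ lines, G.IsClique (ℓ : Set V)
  exists_line_of_adj : ∀ x y, G.Adj x y → ∃ ℓ ∈ lines, x ∈ ℓ ∧ y ∈ ℓ
  existsUnique_adj : ∀ ℓ ∈ lines, ∀ x ∉ ℓ, ∃! y, y ∈ ℓ ∧ G.Adj x y

/-- A spread, i.e. a partition of the points into lines, encoded by the map `c` sending each point
to (a label of) the line of the spread through it. -/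
def IsSpread [Fintype V] (lines : Set (Finset V)) (c : V → C) : Prop :=
  ∀ i, ({x | c x = i} : Finset V) ∈ lines

namespace IsGeneralizedQuadrangle

lemma mem_line_of_adj_of_adj (hG : IsGeneralizedQuadrangle G lines s) {ℓ : Finset V}
    (hℓ : ℓ ∈ lines) {x y z : V} (hx : x ∈ ℓ) (hy : y ∈ ℓ) (hxy : x ≠ y) (hzx : G.Adj z x)
    (hzy : G.Adj z y) : z ∈ ℓ := by
  by_contra hz
  exact hxy ((hG.existsUnique_adj ℓ hℓ z hz).unique ⟨hx, hzx⟩ ⟨hy, hzy⟩)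

lemma card_le_of_isClique (hG : IsGeneralizedQuadrangle G lines s) {S : Finset V}
    (hS : G.IsClique (S : Set V)) : #S ≤ s + 1 := by
  rcases le_or_gt #S 1 with hS1 | hS1
  · omega
  obtain ⟨x, hx, y, hy, hxy⟩ := one_lt_card.1 hS1
  obtain ⟨ℓ, hℓ, hxℓ, hyℓ⟩ := hG.exists_line_of_adj x y (hS hx hy hxy)
  rw [← hG.card_line ℓ hℓ]
  refine card_le_card fun z hz ↦ ?_
  by_cases hzx : z = x
  · exact hzx ▸ hxℓ
  by_cases hzy : z = y
  · exact hzy ▸ hyℓ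
  exact hG.mem_line_of_adj_of_adj hℓ hxℓ hyℓ hxy (hS hz hx hzx) (hS hz hy hzy)

lemma existsUnique_commonNeighbor_eq_or_adj (hG : IsGeneralizedQuadrangle G lines s) {x y z : V}
    (hne : x ≠ y) (hxy : ¬ G.Adj x y) (hxz : G.Adj x z) :
    ∃! w, w ∈ G.commonNeighbors x y ∧ (z = w ∨ G.Adj z w) := by
  obtain ⟨ℓ, hℓ, hx, hz⟩ := hG.exists_line_of_adj x z hxz
  have hy : y ∉ ℓ := fun hy ↦ hxy (hG.isClique_line ℓ hℓ hx hy hne)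
  have mem_iff (w : V) : w ∈ G.commonNeighbors x y ∧ (z = w ∨ G.Adj z w) ↔
      w ∈ ℓ ∧ G.Adj y w := by
    rw [SimpleGraph.mem_commonNeighbors]
    constructor
    · rintro ⟨⟨hxw, hyw⟩, rfl | hzw⟩
      · exact ⟨hz, hyw⟩
      · exact ⟨hG.mem_line_of_adj_of_adj hℓ hx hz hxz.ne hxw.symm hzw.symm, hyw⟩
    · rintro ⟨hw, hyw⟩
      have hxw : x ≠ w := fun h ↦ hxy (h ▸ hyw.symm)
      exact ⟨⟨hG.isClique_line ℓ hℓ hx hw hxw, hyw⟩,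
        or_iff_not_imp_left.2 (hG.isClique_line ℓ hℓ hz hw)⟩
  simpa only [mem_iff] using hG.existsUnique_adj ℓ hℓ y hy

variable [Fintype V]

lemma toFinset_commonNeighbors (hG : IsGeneralizedQuadrangle G lines s) {ℓ : Finset V}
    (hℓ : ℓ ∈ lines) {x y : V} (hx : x ∈ ℓ) (hy : y ∈ ℓ) (hxy : x ≠ y) :
    (G.commonNeighbors x y).toFinset = (ℓ.erase x).erase y := by
  ext z
  simp only [Set.mem_toFinset, SimpleGraph.mem_commonNeighbors, mem_erase]
  constructor
  · rintro ⟨hxz, hyz⟩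
    exact ⟨hyz.ne', hxz.ne', hG.mem_line_of_adj_of_adj hℓ hx hy hxy hxz.symm hyz.symm⟩
  · rintro ⟨hzy, hzx, hz⟩
    exact ⟨hG.isClique_line ℓ hℓ hx hz hzx.symm, hG.isClique_line ℓ hℓ hy hz hzy.symm⟩

lemma card_commonNeighbors_of_adj (hG : IsGeneralizedQuadrangle G lines s) {x y : V}
    (hxy : G.Adj x y) : Fintype.card (G.commonNeighbors x y) = s - 1 := by
  obtain ⟨ℓ, hℓ, hx, hy⟩ := hG.exists_line_of_adj x y hxy
  rw [← Set.toFinset_card, hG.toFinset_commonNeighbors hℓ hx hy hxy.ne,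
    card_erase_of_mem (mem_erase.2 ⟨hxy.ne', hy⟩), card_erase_of_mem hx, hG.card_line ℓ hℓ]
  omega

lemma card_neighbors_eq_or_adj (hG : IsGeneralizedQuadrangle G lines s) (hs : 0 < s) {x w : V}
    (hxw : G.Adj x w) : #{z ∈ G.neighborFinset x | z = w ∨ G.Adj z w} = s := by
  have hinsert : {z ∈ G.neighborFinset x | z = w ∨ G.Adj z w} =
      insert w (G.commonNeighbors x w).toFinset := by
    ext z
    simp only [mem_filter, SimpleGraph.mem_neighborFinset, mem_insert, Set.mem_toFinset,
      SimpleGraph.mem_commonNeighbors, G.adj_comm w z]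
    constructor
    · tauto
    · rintro (rfl | h) <;> tauto
  rw [hinsert, card_insert_of_notMem (by simp [SimpleGraph.mem_commonNeighbors]),
    Set.toFinset_card, hG.card_commonNeighbors_of_adj hxw]
  omega

lemma card_commonNeighbors_mul_of_not_adj (hG : IsGeneralizedQuadrangle G lines s) (hs : 0 < s)
    {x y : V} (hne : x ≠ y) (hxy : ¬ G.Adj x y) :
    Fintype.card (G.commonNeighbors x y) * s = G.degree x := by
  rw [← Set.toFinset_card, ← SimpleGraph.card_neighborFinset_eq_degree,
    ← mul_one #(G.neighborFinset x)]
  refine (card_mul_eq_card_mul (fun z w ↦ z = w ∨ G.Adj z w) (fun z hz ↦ ?_)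
    (fun w hw ↦ ?_)).symm
  · rw [card_eq_one_iff_existsUnique]
    simpa [mem_bipartiteAbove] using hG.existsUnique_commonNeighbor_eq_or_adj hne hxy
      ((G.mem_neighborFinset x z).1 hz)
  · exact hG.card_neighbors_eq_or_adj hs (Set.mem_toFinset.1 hw).1

variable [Fintype C] {c : V → C}

lemma card_eq_of_isSpread (hG : IsGeneralizedQuadrangle G lines s) (hc : IsSpread lines c) :
    Fintype.card V = (s + 1) * Fintype.card C := by
  rw [← card_univ, card_eq_sum_card_fiberwise (f := c) (t := univ) (by simp),
    sum_const_nat fun i _ ↦ hG.card_line _ (hc i), card_univ, mul_comm]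

lemma degree_of_isSpread (hG : IsGeneralizedQuadrangle G lines s) (hc : IsSpread lines c)
    (x : V) : G.degree x = s + (Fintype.card C - 1) := by
  have card_same : #{z ∈ G.neighborFinset x | c z = c x} = s := by
    have : {z ∈ G.neighborFinset x | c z = c x} = ({z | c z = c x} : Finset V).erase x := by
      ext z
      simp only [mem_filter, SimpleGraph.mem_neighborFinset, mem_erase, mem_univ, true_and]
      exact and_congr_left fun hz ↦ ⟨fun h ↦ h.ne', fun h ↦
        hG.isClique_line _ (hc (c x)) (by simp) (by simpa using hz) h.symm⟩
    rw [this, card_erase_of_mem (by simp), hG.card_line _ (hc _), Nat.add_sub_cancel]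
  have card_other : ∀ i ∈ univ.erase (c x), #{z ∈ G.neighborFinset x | c z = i} = 1 := by
    intro i hi
    rw [card_eq_one_iff_existsUnique]
    simpa [and_comm] using hG.existsUnique_adj _ (hc i) x (by simpa using (ne_of_mem_erase hi).symm)
  rw [← SimpleGraph.card_neighborFinset_eq_degree,
    card_eq_sum_card_fiberwise (f := c) (t := univ) (by simp), ← add_sum_erase _ _ (mem_univ (c x)),
    card_same, sum_congr rfl card_other, sum_const, smul_eq_mul, mul_one,
    card_erase_of_mem (mem_univ _), card_univ]

lemma isSRGWith_of_isSpread (hG : IsGeneralizedQuadrangle G lines s) (hs : 0 < s)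
    (hc : IsSpread lines c) (hC : Fintype.card C = s * t + 1) :
    G.IsSRGWith ((s + 1) * (s * t + 1)) (s * (t + 1)) (s - 1) (t + 1) := by
  have hdeg (x : V) : G.degree x = s * (t + 1) := by
    rw [hG.degree_of_isSpread hc, hC, Nat.add_sub_cancel]
    ring
  refine ⟨by rw [hG.card_eq_of_isSpread hc, hC], hdeg,
    fun x y ↦ hG.card_commonNeighbors_of_adj, fun x y hne hxy ↦ ?_⟩
  apply Nat.eq_of_mul_eq_mul_right hs
  rw [hG.card_commonNeighbors_mul_of_not_adj hs hne hxy, hdeg, mul_comm]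

lemma compl_isSRGWith_of_isSpread (hG : IsGeneralizedQuadrangle G lines s) (hs : 0 < s)
    (hc : IsSpread lines c) (hC : Fintype.card C = s * t + 1) :
    Gᶜ.IsSRGWith ((s + 1) * (s * t + 1)) (s ^ 2 * t) (s * (s - 1) * t + t - s)
      (s * (s - 1) * t) := by
  obtain ⟨r, rfl⟩ := Nat.exists_eq_add_one.2 hs
  have hcompl := (hG.isSRGWith_of_isSpread hs hc hC).compl
  simp only [Nat.add_sub_cancel] at hcompl ⊢
  convert hcompl using 1 <;> ring_nf <;> omega

lemma compl_chromaticNumber_of_isSpread (hG : IsGeneralizedQuadrangle G lines s)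
    (hc : IsSpread lines c) : Gᶜ.chromaticNumber = Fintype.card C := by
  refine le_antisymm ?_ (SimpleGraph.le_chromaticNumber_iff_coloring.2 fun m κ ↦ ?_)
  · refine (SimpleGraph.Coloring.mk c fun {x y} hxy hcxy ↦ ?_).colorable.chromaticNumber_le
    exact hxy.2 (hG.isClique_line _ (hc (c y)) (by simpa using hcxy) (by simp) hxy.1)
  · have card_color : ∀ i ∈ univ, #{x | κ x = i} ≤ s + 1 := fun i _ ↦
      hG.card_le_of_isClique fun x hx y hy hxy ↦ by
        by_contra hnadj
        simp only [coe_filter, mem_univ, true_and, Set.mem_ofPred_eq] at hx hy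
        exact κ.valid ((G.compl_adj x y).2 ⟨hxy, hnadj⟩) (hx.trans hy.symm)
    have hle : Fintype.card V ≤ (s + 1) * m := by
      simpa using card_le_mul_card_image_of_maps_to (t := univ) (by simp) (s + 1) card_color
    rw [hG.card_eq_of_isSpread hc] at hle
    exact_mod_cast Nat.le_of_mul_le_mul_left hle s.succ_pos

end IsGeneralizedQuadrangle

end GeneralizedQuadrangle

section Eigenprojection

variable {V : Type*} (G : SimpleGraph V) (s : ℕ)

/-- If `G` is the collinearity graph of a generalized quadrangle of order `(s, t)`, this is
`(s + t)(s + 1)` times the orthogonal projection onto the `(-t - 1)`-eigenspace of the adjacency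
matrix of `G`. -/
noncomputable def eigenprojectionMatrix : Matrix V V ℝ :=
  Matrix.of fun x y ↦ if x = y then (s : ℝ) ^ 2 else if G.Adj x y then -(s : ℝ) else 1

lemma eigenprojectionMatrix_eq : eigenprojectionMatrix G s =
    ((s : ℝ) ^ 2 - 1) • 1 - ((s : ℝ) + 1) • G.adjMatrix ℝ + Matrix.of 1 := by
  ext x y
  by_cases hxy : x = y
  · simp [eigenprojectionMatrix, hxy]
  · by_cases hadj : G.Adj x y <;> simp [eigenprojectionMatrix, hxy, hadj]

lemma isSymm_eigenprojectionMatrix : (eigenprojectionMatrix G s).IsSymm :=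
  Matrix.IsSymm.ext fun x y ↦ by simp [eigenprojectionMatrix, eq_comm, G.adj_comm]

variable {G s} [Fintype V] {t : ℕ}

lemma adjMatrix_mul_adjMatrix_of_isSRGWith {n k ℓ μ : ℕ} (hG : G.IsSRGWith n k ℓ μ) :
    G.adjMatrix ℝ * G.adjMatrix ℝ =
      ((k : ℝ) - μ) • 1 + ((ℓ : ℝ) - μ) • G.adjMatrix ℝ + (μ : ℝ) • Matrix.of 1 := by
  rw [← pow_two, hG.matrix_eq, ← G.compl_adjMatrix_eq_adjMatrix_compl ℝ,
    ← G.one_add_adjMatrix_add_compl_adjMatrix_eq_of_one ℝ]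
  module

lemma adjMatrix_mul_of_one {k : ℕ} (hG : G.IsRegularOfDegree k) :
    G.adjMatrix ℝ * Matrix.of 1 = (k : ℝ) • (Matrix.of 1 : Matrix V V ℝ) := by
  ext x y
  simp [SimpleGraph.adjMatrix_mul_apply, hG.degree_eq x]

lemma of_one_mul_adjMatrix {k : ℕ} (hG : G.IsRegularOfDegree k) :
    Matrix.of 1 * G.adjMatrix ℝ = (k : ℝ) • (Matrix.of 1 : Matrix V V ℝ) := by
  ext x y
  simp [SimpleGraph.mul_adjMatrix_apply, hG.degree_eq y]

lemma of_one_mul_of_one : (Matrix.of 1 : Matrix V V ℝ) * Matrix.of 1 =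
    (Fintype.card V : ℝ) • (Matrix.of 1 : Matrix V V ℝ) := by
  ext x y
  simp [Matrix.mul_apply]

lemma eigenprojectionMatrix_mul_self (hs : 0 < s)
    (hG : G.IsSRGWith ((s + 1) * (s * t + 1)) (s * (t + 1)) (s - 1) (t + 1)) :
    eigenprojectionMatrix G s * eigenprojectionMatrix G s =
      (((s : ℝ) + t) * (s + 1)) • eigenprojectionMatrix G s := by
  simp only [eigenprojectionMatrix_eq, mul_add, add_mul, mul_sub, sub_mul, smul_mul_assoc,
    mul_smul_comm, one_mul, mul_one, adjMatrix_mul_adjMatrix_of_isSRGWith hG,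
    adjMatrix_mul_of_one hG.regular, of_one_mul_adjMatrix hG.regular, of_one_mul_of_one, hG.card]
  push_cast [Nat.cast_sub (Nat.one_le_of_lt hs)]
  module

lemma trace_eigenprojectionMatrix :
    (eigenprojectionMatrix G s).trace = Fintype.card V * (s : ℝ) ^ 2 := by
  simp [Matrix.trace, eigenprojectionMatrix]

end Eigenprojection

section Embedding

variable {V : Type*} {G : SimpleGraph V} {s t d : ℕ}

lemma exists_finset_iso_unitDistanceGraph [Finite V] (f : V → EuclideanSpace ℝ (Fin d))
    (hone : ∀ x y, x ≠ y → 1 ≤ dist (f x) (f y)) (hadj : ∀ x y, G.Adj x y ↔ dist (f x) (f y) = 1) :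
    ∃ P : Finset (EuclideanSpace ℝ (Fin d)), (∀ x ∈ P, ∀ y ∈ P, x ≠ y → 1 ≤ dist x y) ∧
      Nonempty (G ≃g unitDistanceGraph (P : Set (EuclideanSpace ℝ (Fin d)))) := by
  have hinj : f.Injective := fun x y hxy ↦ by
    by_contra hne
    have := hone x y hne
    rw [hxy, dist_self] at this
    linarith
  refine ⟨(Set.finite_range f).toFinset, ?_, ?_⟩
  · simp only [Set.Finite.mem_toFinset]
    rintro _ ⟨x, rfl⟩ _ ⟨y, rfl⟩ hxy
    exact hone x y (ne_of_apply_ne f hxy)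
  · rw [Set.Finite.coe_toFinset]
    exact ⟨⟨Equiv.ofInjective f hinj, (hadj _ _).symm⟩⟩

variable [Fintype V]

lemma sum_mul_apply_of_isIdempotentElem {E : Matrix V V ℝ} (hE : IsIdempotentElem E)
    (hsymm : E.IsSymm) (x y : V) : ∑ z, E z x * E z y = E x y := by
  conv_rhs => rw [← hE.eq, Matrix.mul_apply]
  exact sum_congr rfl fun z _ ↦ by rw [hsymm.apply x z]

lemma finrank_range_toEuclideanLin {E : Matrix V V ℝ} (hE : IsIdempotentElem E) :
    (Module.finrank ℝ (LinearMap.range (Matrix.toEuclideanLin E)) : ℝ) = E.trace := by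
  have hidem : IsIdempotentElem (Matrix.toEuclideanLin E) := LinearMap.ext fun v ↦ by
    simp [Matrix.toLpLin_apply, Matrix.mulVec_mulVec, hE.eq]
  rw [← (LinearMap.IsIdempotentElem.isProj_range _ hidem).trace,
    LinearMap.trace_eq_matrix_trace ℝ (EuclideanSpace.basisFun V ℝ).toBasis,
    Matrix.toEuclideanLin_eq_toLin_orthonormal, LinearMap.toMatrix_toLin]

-- The image of `x` is the column of `E` indexed by `x`, read in an orthonormal basis of the range.
lemma exists_dist_sq_eq_of_isIdempotentElem {E : Matrix V V ℝ} (hE : IsIdempotentElem E)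
    (hsymm : E.IsSymm) (htrace : E.trace = d) :
    ∃ f : V → EuclideanSpace ℝ (Fin d), ∀ x y,
      dist (f x) (f y) ^ 2 = E x x + E y y - 2 * E x y := by
  have hrank : Module.finrank ℝ (LinearMap.range (Matrix.toEuclideanLin E)) = d := by
    exact_mod_cast (finrank_range_toEuclideanLin hE).trans htrace
  let b := (stdOrthonormalBasis ℝ (LinearMap.range (Matrix.toEuclideanLin E))).reindex
    (finCongr hrank)
  refine ⟨fun x ↦ b.repr ⟨Matrix.toEuclideanLin E (EuclideanSpace.single x 1),
    LinearMap.mem_range_self _ _⟩, fun x y ↦ ?_⟩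
  have apply_single (x z : V) : Matrix.toEuclideanLin E (EuclideanSpace.single x 1) z = E z x := by
    simp [Matrix.toLpLin_apply]
  calc dist (b.repr _) (b.repr _) ^ 2 = ∑ z, (E z x - E z y) ^ 2 := by
        rw [LinearIsometryEquiv.dist_map, Subtype.dist_eq, EuclideanSpace.dist_eq,
          Real.sq_sqrt (sum_nonneg fun i _ ↦ sq_nonneg _)]
        simp only [apply_single, Real.dist_eq, sq_abs]
    _ = ∑ z, (E z x * E z x + E z y * E z y - 2 * (E z x * E z y)) :=
        sum_congr rfl fun z _ ↦ by ring
    _ = E x x + E y y - 2 * E x y := by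
        simp only [sum_sub_distrib, sum_add_distrib, ← mul_sum,
          sum_mul_apply_of_isIdempotentElem hE hsymm]

lemma exists_dist_sq_eq_of_isSRGWith (hs : 0 < s)
    (hG : G.IsSRGWith ((s + 1) * (s * t + 1)) (s * (t + 1)) (s - 1) (t + 1))
    (hd : d * (s + t) = s ^ 2 * (s * t + 1)) :
    ∃ f : V → EuclideanSpace ℝ (Fin d), ∀ x y, x ≠ y →
      dist (f x) (f y) ^ 2 = 2 * (if G.Adj x y then (s : ℝ) else s - 1) / (s + t) := by
  have : (0 : ℝ) < s := by exact_mod_cast hs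
  have hd' : (d : ℝ) * (s + t) = s ^ 2 * (s * t + 1) := by exact_mod_cast hd
  set m : ℝ := (s + t) * (s + 1) with hm
  have hm0 : m ≠ 0 := by positivity
  have hidem : IsIdempotentElem (m⁻¹ • eigenprojectionMatrix G s) := by
    rw [IsIdempotentElem, smul_mul_assoc, mul_smul_comm, eigenprojectionMatrix_mul_self hs hG,
      inv_smul_smul₀ hm0]
  have htrace : (m⁻¹ • eigenprojectionMatrix G s).trace = d := by
    rw [Matrix.trace_smul, trace_eigenprojectionMatrix, hG.card, smul_eq_mul,
      inv_mul_eq_iff_eq_mul₀ hm0]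
    push_cast
    linear_combination -(s + 1 : ℝ) * hd'
  obtain ⟨f, hf⟩ := exists_dist_sq_eq_of_isIdempotentElem hidem
    ((isSymm_eigenprojectionMatrix G s).smul _) htrace
  refine ⟨f, fun x y hxy ↦ ?_⟩
  rw [hf]
  by_cases hadj : G.Adj x y <;>
  · simp only [eigenprojectionMatrix, Matrix.smul_apply, Matrix.of_apply, hxy, hadj, if_true,
      if_false, smul_eq_mul, hm]
    field

lemma exists_dist_eq_one_of_isSRGWith (hs : 2 ≤ s)
    (hG : G.IsSRGWith ((s + 1) * (s * t + 1)) (s * (t + 1)) (s - 1) (t + 1))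
    (hd : d * (s + t) = s ^ 2 * (s * t + 1)) :
    ∃ f : V → EuclideanSpace ℝ (Fin d), ∀ x y, x ≠ y →
      (G.Adj x y → 1 < dist (f x) (f y)) ∧ (¬ G.Adj x y → dist (f x) (f y) = 1) := by
  obtain ⟨f, hf⟩ := exists_dist_sq_eq_of_isSRGWith (by omega) hG hd
  have hs' : (0 : ℝ) < s - 1 := by
    have : (2 : ℝ) ≤ s := by exact_mod_cast hs
    linarith
  have hδ : 0 < 2 * ((s : ℝ) - 1) / (s + t) := by positivity
  set δ : ℝ := 2 * ((s : ℝ) - 1) / (s + t)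
  refine ⟨fun x ↦ (√δ)⁻¹ • f x, fun x y hxy ↦ ?_⟩
  have dist_smul : dist ((√δ)⁻¹ • f x) ((√δ)⁻¹ • f y) = dist (f x) (f y) / √δ := by
    rw [dist_smul₀, norm_inv, Real.norm_of_nonneg δ.sqrt_nonneg, inv_mul_eq_div]
  simp only [dist_smul]
  constructor
  · intro hadj
    rw [one_lt_div (Real.sqrt_pos.2 hδ)]
    refine lt_of_pow_lt_pow_left₀ 2 dist_nonneg ?_
    rw [Real.sq_sqrt hδ.le, hf x y hxy, if_pos hadj]
    exact div_lt_div_of_pos_right (by linarith) (by positivity)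
  · intro hadj
    rw [div_eq_one_iff_eq (Real.sqrt_ne_zero'.2 hδ), eq_comm,
      Real.sqrt_eq_iff_eq_sq hδ.le dist_nonneg, hf x y hxy, if_neg hadj]

lemma isSRGWith_of_iso {W : Type*} [Fintype W] {H : SimpleGraph W} [DecidableRel G.Adj]
    [DecidableRel H.Adj] {n k ℓ μ : ℕ} (e : G ≃g H)
    (hG : G.IsSRGWith n k ℓ μ) : H.IsSRGWith n k ℓ μ := by
  have card_commonNeighbors (x y : W) : Fintype.card (H.commonNeighbors x y) =
      Fintype.card (G.commonNeighbors (e.symm x) (e.symm y)) :=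
    Fintype.card_congr (e.symm.toEquiv.subtypeEquiv fun z ↦ by
      simpa [SimpleGraph.mem_commonNeighbors] using
        (and_congr e.symm.map_adj_iff e.symm.map_adj_iff).symm)
  refine ⟨?_, fun x ↦ ?_, fun x y hxy ↦ ?_, fun x y hne hxy ↦ ?_⟩
  · rw [← Fintype.card_congr e.toEquiv, hG.card]
  · rw [← e.symm.degree_eq, hG.regular]
  · rw [card_commonNeighbors, hG.of_adj _ _ (e.symm.map_adj_iff.2 hxy)]
  · rw [card_commonNeighbors]
    exact hG.of_not_adj (e.symm.injective.ne hne) (mt e.symm.map_adj_iff.1 hxy)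

lemma exists_finset_compl_iso_unitDistanceGraph (hs : 2 ≤ s)
    (hG : G.IsSRGWith ((s + 1) * (s * t + 1)) (s * (t + 1)) (s - 1) (t + 1))
    (hd : d * (s + t) = s ^ 2 * (s * t + 1)) :
    ∃ P : Finset (EuclideanSpace ℝ (Fin d)), (∀ x ∈ P, ∀ y ∈ P, x ≠ y → 1 ≤ dist x y) ∧
      Nonempty (Gᶜ ≃g unitDistanceGraph (P : Set (EuclideanSpace ℝ (Fin d)))) := by
  obtain ⟨f, hf⟩ := exists_dist_eq_one_of_isSRGWith hs hG hd
  refine exists_finset_iso_unitDistanceGraph f (fun x y hxy ↦ ?_) fun x y ↦ ?_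
  · rcases em (G.Adj x y) with hadj | hadj
    exacts [((hf x y hxy).1 hadj).le, ((hf x y hxy).2 hadj).ge]
  · rw [SimpleGraph.compl_adj]
    refine ⟨fun h ↦ (hf x y h.1).2 h.2, fun h ↦ ?_⟩
    have hne : x ≠ y := by
      rintro rfl
      simp at h
    exact ⟨hne, fun hadj ↦ ((hf x y hne).1 hadj).ne' h⟩

end Embedding

section Quadric

open QuadraticMap (polar)
open scoped LinearAlgebra.Projectivization

variable {F V : Type*} [Field F] [AddCommGroup V] [Module F V]

lemma mk_rep_mem_iff {v : V} (hv : v ≠ 0) (L : Submodule F V) :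
    (Projectivization.mk F v hv).rep ∈ L ↔ v ∈ L := by
  obtain ⟨a, ha⟩ := Projectivization.exists_smul_eq_mk_rep F v hv
  rw [← ha]
  exact L.smul_mem_iff_of_isUnit a.isUnit

lemma eq_mk_of_rep_eq_smul {p : ℙ F V} {v : V} (hv : v ≠ 0) {a : F} (ha : a • v = p.rep) :
    p = Projectivization.mk F v hv := by
  rw [← p.mk_rep, Projectivization.mk_eq_mk_iff']
  exact ⟨a, ha⟩

lemma exists_apply_eq_zero_iff_of_finrank_eq_two (hV : Module.finrank F V = 2)
    {φ : Module.Dual F V} (hφ : φ ≠ 0) : ∃ v ≠ 0, ∀ w, φ w = 0 ↔ ∃ a : F, a • v = w := by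
  have := Module.finite_of_finrank_eq_succ hV
  have hker : Module.finrank F (LinearMap.ker φ) = 1 := by
    have := Module.Dual.finrank_ker_add_one_of_ne_zero hφ
    omega
  obtain ⟨v, hv, hspan⟩ := finrank_eq_one_iff'.1 hker
  refine ⟨v, by simpa using hv, fun w ↦ ⟨fun hw ↦ ?_, ?_⟩⟩
  · obtain ⟨a, ha⟩ := hspan ⟨w, hw⟩
    exact ⟨a, congrArg Subtype.val ha⟩
  · rintro ⟨a, rfl⟩
    rw [map_smul, v.2, smul_zero]

variable (Q : QuadraticForm F V)

/-- The points of the projective quadric `Q = 0`. -/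
abbrev SingularPoint : Type _ := {p : ℙ F V // Q p.rep = 0}

/-- The subspace `L` lies on the quadric `Q = 0`. -/
def IsTotallySingular (L : Submodule F V) : Prop := ∀ v ∈ L, Q v = 0

/-- Two distinct points of the quadric are adjacent if the line joining them lies on it. -/
def quadricCollinearityGraph : SimpleGraph (SingularPoint Q) where
  Adj p q := p ≠ q ∧ polar Q p.1.rep q.1.rep = 0
  symm := ⟨fun _ _ h ↦ ⟨h.1.symm, by rw [QuadraticMap.polar_comm, h.2]⟩⟩
  loopless := ⟨fun _ h ↦ h.1 rfl⟩

/-- The Witt index of `Q` is at most two, in the form: every two-dimensional totally singular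
subspace is a maximal totally singular subspace. -/
def WittIndexLETwo : Prop :=
  ∀ L : Submodule F V, IsTotallySingular Q L → Module.finrank F L = 2 →
    ∀ x, Q x = 0 → (∀ v ∈ L, polar Q x v = 0) → x ∈ L

variable {Q}

lemma mk_rep_singular_iff {v : V} (hv : v ≠ 0) :
    Q (Projectivization.mk F v hv).rep = 0 ↔ Q v = 0 := by
  obtain ⟨a, ha⟩ := Projectivization.exists_smul_eq_mk_rep F v hv
  simp [← ha, Units.smul_def, QuadraticMap.map_smul]

lemma polar_mk_rep_eq_zero_iff {v : V} (hv : v ≠ 0) (x : V) :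
    polar Q x (Projectivization.mk F v hv).rep = 0 ↔ polar Q x v = 0 := by
  obtain ⟨a, ha⟩ := Projectivization.exists_smul_eq_mk_rep F v hv
  simp [← ha, Units.smul_def]

lemma IsTotallySingular.polar_eq_zero {L : Submodule F V} (hL : IsTotallySingular Q L) {x y : V}
    (hx : x ∈ L) (hy : y ∈ L) : polar Q x y = 0 := by
  simp [polar, hL _ (L.add_mem hx hy), hL x hx, hL y hy]

lemma isTotallySingular_span_pair {x y : V} (hx : Q x = 0) (hy : Q y = 0)
    (hxy : polar Q x y = 0) : IsTotallySingular Q (Submodule.span F {x, y}) := by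
  intro v hv
  obtain ⟨a, b, rfl⟩ := Submodule.mem_span_pair.1 hv
  simp [QuadraticMap.map_add, QuadraticMap.map_smul, hx, hy, hxy]

lemma finrank_span_rep_pair {p q : ℙ F V} (hpq : p ≠ q) :
    Module.finrank F (Submodule.span F {p.rep, q.rep}) = 2 := by
  have hli := Projectivization.linearIndependent_pair_iff_ne.2 hpq
  rw [← Matrix.range_cons_cons_empty p.rep q.rep ![], finrank_span_eq_card hli, Fintype.card_fin]

variable [Fintype (SingularPoint Q)]

variable (Q) in
/-- The points of the quadric in the subspace `L`. -/
noncomputable def singularPointsIn (L : Submodule F V) : Finset (SingularPoint Q) :=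
  {p | p.1.rep ∈ L}

variable (Q) in
/-- The lines contained in the quadric, as sets of points. -/
def quadricLines : Set (Finset (SingularPoint Q)) :=
  {ℓ | ∃ L : Submodule F V, IsTotallySingular Q L ∧ Module.finrank F L = 2 ∧
    singularPointsIn Q L = ℓ}

lemma mem_singularPointsIn {L : Submodule F V} {p : SingularPoint Q} :
    p ∈ singularPointsIn Q L ↔ p.1.rep ∈ L := by
  simp [singularPointsIn]

lemma card_singularPointsIn [Finite F] {L : Submodule F V} (hL : IsTotallySingular Q L)
    (hdim : Module.finrank F L = 2) : #(singularPointsIn Q L) = Nat.card F + 1 := by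
  have rep_ne_zero (p : ℙ F L) : (p.rep : V) ≠ 0 := by simpa using p.rep_nonzero
  let toSingularPoint (p : ℙ F L) : singularPointsIn Q L :=
    ⟨⟨Projectivization.mk F p.rep (rep_ne_zero p),
      (mk_rep_singular_iff (rep_ne_zero p)).2 (hL _ p.rep.2)⟩,
      mem_singularPointsIn.2 ((mk_rep_mem_iff (rep_ne_zero p) L).2 p.rep.2)⟩
  rw [← Projectivization.card_of_finrank_two F L hdim, ← Fintype.card_coe,
    ← Nat.card_eq_fintype_card]
  refine (Nat.card_eq_of_bijective toSingularPoint ⟨fun p r hpr ↦ ?_, fun r ↦ ?_⟩).symm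
  · obtain ⟨a, ha⟩ := (Projectivization.mk_eq_mk_iff' ..).1
      (congrArg (fun r : singularPointsIn Q L ↦ r.1.1) hpr)
    have ha' : a • r.rep = p.rep := Subtype.ext ha
    exact (eq_mk_of_rep_eq_smul r.rep_nonzero ha').trans r.mk_rep
  · have hr : r.1.1.rep ∈ L := mem_singularPointsIn.1 r.2
    have hne : (⟨r.1.1.rep, hr⟩ : L) ≠ 0 := by simpa using r.1.1.rep_nonzero
    obtain ⟨a, ha⟩ := Projectivization.exists_smul_eq_mk_rep F _ hne
    refine ⟨Projectivization.mk F _ hne, Subtype.ext (Subtype.ext (Eq.trans ?_ r.1.1.mk_rep))⟩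
    exact (Projectivization.mk_eq_mk_iff ..).2 ⟨a, congrArg Subtype.val ha⟩

lemma existsUnique_mem_singularPointsIn_polar_eq_zero (hQ : WittIndexLETwo Q)
    {L : Submodule F V} (hL : IsTotallySingular Q L) (hdim : Module.finrank F L = 2)
    {p : SingularPoint Q} (hp : p ∉ singularPointsIn Q L) :
    ∃! r, r ∈ singularPointsIn Q L ∧ polar Q p.1.rep r.1.rep = 0 := by
  have hpolar : Q.polarBilin p.1.rep ∘ₗ L.subtype ≠ 0 := fun h ↦
    hp (mem_singularPointsIn.2 (hQ L hL hdim _ p.2 fun v hv ↦ LinearMap.congr_fun h ⟨v, hv⟩))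
  obtain ⟨v, hv, hspan⟩ := exists_apply_eq_zero_iff_of_finrank_eq_two hdim hpolar
  have hv' : (v : V) ≠ 0 := by simpa using hv
  refine ⟨⟨Projectivization.mk F v hv', (mk_rep_singular_iff hv').2 (hL v v.2)⟩,
    ⟨mem_singularPointsIn.2 ((mk_rep_mem_iff hv' L).2 v.2), ?_⟩, ?_⟩
  · exact (polar_mk_rep_eq_zero_iff hv' _).2 ((hspan v).2 ⟨1, one_smul F v⟩)
  · rintro r ⟨hr, hpr⟩
    obtain ⟨a, ha⟩ := (hspan ⟨r.1.rep, mem_singularPointsIn.1 hr⟩).1 hpr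
    exact Subtype.ext (eq_mk_of_rep_eq_smul hv' (congrArg Subtype.val ha))

lemma isGeneralizedQuadrangle_quadric [Finite F] (hQ : WittIndexLETwo Q) :
    IsGeneralizedQuadrangle (quadricCollinearityGraph Q) (quadricLines Q) (Nat.card F) where
  card_line := by
    rintro _ ⟨L, hL, hdim, rfl⟩
    exact card_singularPointsIn hL hdim
  isClique_line := by
    rintro _ ⟨L, hL, -, rfl⟩ p hp r hr hpr
    exact ⟨hpr, hL.polar_eq_zero (mem_singularPointsIn.1 hp) (mem_singularPointsIn.1 hr)⟩
  exists_line_of_adj := by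
    rintro p r ⟨hne, hpr⟩
    exact ⟨_, ⟨_, isTotallySingular_span_pair p.2 r.2 hpr,
      finrank_span_rep_pair (Subtype.coe_injective.ne hne), rfl⟩,
      mem_singularPointsIn.2 (Submodule.subset_span (by simp)),
      mem_singularPointsIn.2 (Submodule.subset_span (by simp))⟩
  existsUnique_adj := by
    rintro _ ⟨L, hL, hdim, rfl⟩ p hp
    obtain ⟨r, ⟨hr, hpr⟩, hunique⟩ :=
      existsUnique_mem_singularPointsIn_polar_eq_zero hQ hL hdim hp
    exact ⟨r, ⟨hr, fun h ↦ hp (h ▸ hr), hpr⟩, fun r' h ↦ hunique r' ⟨h.1, h.2.2⟩⟩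

end Quadric

section QuadraticExtension

variable {F K : Type*} [Field F] [Field K] [Algebra F K]

/-- `σ` is the conjugation of the quadratic extension `K / F`, characterised through the trace. -/
def IsConjugation (σ : K →ₐ[F] K) : Prop :=
  ∀ a, algebraMap F K (Algebra.trace F K a) = a + σ a

variable {σ : K →ₐ[F] K}

lemma IsConjugation.apply_apply (hσ : IsConjugation σ) (a : K) : σ (σ a) = a := by
  have := congrArg σ (hσ a)
  rw [σ.commutes, hσ, map_add] at this
  linear_combination -this

variable [FiniteDimensional F K] [Algebra.IsSeparable F K]

lemma IsConjugation.exists_algebraMap_eq (hσ : IsConjugation σ) {a : K} (ha : σ a = a) :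
    ∃ r, algebraMap F K r = a := by
  obtain ⟨θ, hθ⟩ := Algebra.trace_surjective F K 1
  refine ⟨Algebra.trace F K (a * θ), ?_⟩
  have hθ' : θ + σ θ = 1 := by rw [← hσ, hθ, map_one]
  rw [hσ, map_mul, ha, ← mul_add, hθ', mul_one]

lemma eq_zero_of_forall_trace_mul_eq_zero {a : K}
    (ha : ∀ c, Algebra.trace F K (c * a) = 0) : a = 0 := by
  obtain ⟨θ, hθ⟩ := Algebra.trace_surjective F K 1
  by_contra ha0
  have := ha (θ / a)
  rw [div_mul_cancel₀ θ ha0, hθ] at this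
  exact one_ne_zero this

end QuadraticExtension

section HermitianForm

open QuadraticMap (polar)
open scoped LinearAlgebra.Projectivization

variable {F K V : Type*} [Field F] [Field K] [Algebra F K] [AddCommGroup V] [Module K V]
  {σ : K →ₐ[F] K}

/-- The Witt index of the Hermitian form `H` is at most one: orthogonal isotropic vectors are
proportional. -/
def WittIndexLEOne (H : V →ₛₗ[(σ : K →+* K)] V →ₗ[K] K) : Prop :=
  ∀ x y, x ≠ 0 → H x x = 0 → H y y = 0 → H x y = 0 → ∃ c : K, c • x = y

/-- The points of the projective Hermitian variety `H(x, x) = 0`. -/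
abbrev IsotropicPoint (H : V →ₛₗ[(σ : K →+* K)] V →ₗ[K] K) : Type _ :=
  {p : ℙ K V // H p.rep p.rep = 0}

variable {H : V →ₛₗ[(σ : K →+* K)] V →ₗ[K] K}

lemma isotropic_smul {x : V} (hx : H x x = 0) (c : K) : H (c • x) (c • x) = 0 := by
  simp [hx]

lemma mk_rep_isotropic_iff {v : V} (hv : v ≠ 0) :
    H (Projectivization.mk K v hv).rep (Projectivization.mk K v hv).rep = 0 ↔ H v v = 0 := by
  obtain ⟨a, ha⟩ := Projectivization.exists_smul_eq_mk_rep K v hv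
  simp [← ha, Units.smul_def]

variable [Module F V]

/-- `Q` is the Hermitian form `H` restricted to the diagonal, where its values lie in `F`. -/
def IsDiagonalOf (Q : QuadraticForm F V) (H : V →ₛₗ[(σ : K →+* K)] V →ₗ[K] K) : Prop :=
  ∀ x, algebraMap F K (Q x) = H x x

variable {Q : QuadraticForm F V}

lemma singular_iff_isotropic (hQ : IsDiagonalOf Q H) (x : V) : Q x = 0 ↔ H x x = 0 := by
  rw [← hQ, map_eq_zero_iff _ (algebraMap F K).injective]

lemma polar_eq_trace (hσ : IsConjugation σ) (hH : H.IsSymm) (hQ : IsDiagonalOf Q H) (x y : V) :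
    polar Q x y = Algebra.trace F K (H x y) := by
  apply (algebraMap F K).injective
  have hsymm : σ (H x y) = H y x := hH.eq x y
  rw [hσ, hsymm]
  simp only [polar, map_sub, hQ _, map_add, LinearMap.add_apply]
  ring

/-- The isotropic point over `K` spanned by a singular point over `F`. -/
noncomputable def isotropicPointOfSingular (hQ : IsDiagonalOf Q H) (p : SingularPoint Q) :
    IsotropicPoint H :=
  ⟨Projectivization.mk K p.1.rep p.1.rep_nonzero,
    (mk_rep_isotropic_iff p.1.rep_nonzero).2 ((singular_iff_isotropic hQ _).1 p.2)⟩

lemma isotropicPointOfSingular_eq_iff (hQ : IsDiagonalOf Q H) {p : SingularPoint Q}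
    {r : IsotropicPoint H} :
    isotropicPointOfSingular hQ p = r ↔ p.1.rep ∈ Submodule.span K {r.1.rep} := by
  rw [← Subtype.coe_inj, isotropicPointOfSingular, ← r.1.mk_rep, Projectivization.mk_eq_mk_iff',
    Submodule.mem_span_singleton, r.1.mk_rep]

variable [IsScalarTower F K V]

lemma exists_isDiagonalOf [FiniteDimensional F K] [Algebra.IsSeparable F K]
    (hσ : IsConjugation σ) (hH : H.IsSymm) : ∃ Q : QuadraticForm F V, IsDiagonalOf Q H := by
  obtain ⟨θ, hθ⟩ := Algebra.trace_surjective F K 1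
  let B : LinearMap.BilinForm F V := LinearMap.mk₂ F (fun x y ↦ Algebra.trace F K (θ * H x y))
    (fun x x' y ↦ by simp [mul_add]) (fun r x y ↦ by
      rw [← algebraMap_smul K r x, map_smulₛₗ, LinearMap.smul_apply, RingHom.coe_coe, σ.commutes,
        algebraMap_smul, mul_smul_comm, map_smul])
    (fun x y y' ↦ by simp [mul_add]) (fun r x y ↦ by
      rw [← algebraMap_smul K r y, map_smul, algebraMap_smul, mul_smul_comm, map_smul])
  refine ⟨B.toQuadraticMap, fun x ↦ ?_⟩
  have hθ' : θ + σ θ = 1 := by rw [← hσ, hθ, map_one]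
  have hsymm : σ (H x x) = H x x := hH.eq x x
  change algebraMap F K (Algebra.trace F K (θ * H x x)) = H x x
  rw [hσ, map_mul, hsymm, ← add_mul, hθ', one_mul]

section WittIndex

lemma finrank_restrictScalars_span_singleton {x : V} (hx : x ≠ 0) :
    Module.finrank F ((Submodule.span K {x}).restrictScalars F) = Module.finrank F K := by
  change Module.finrank F (Submodule.span K {x}) = _
  rw [← Module.finrank_mul_finrank F K, finrank_span_singleton hx, mul_one]

variable [FiniteDimensional F K]

lemma eq_restrictScalars_span_singleton (hW : WittIndexLEOne H) {L : Submodule F V}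
    (hL : ∀ x ∈ L, ∀ y ∈ L, H x y = 0) (hdim : Module.finrank F L = Module.finrank F K)
    {x : V} (hxL : x ∈ L) (hx : x ≠ 0) :
    L = (Submodule.span K {x}).restrictScalars F := by
  have : FiniteDimensional F ((Submodule.span K {x}).restrictScalars F) :=
    FiniteDimensional.trans F K (Submodule.span K {x})
  refine Submodule.eq_of_le_of_finrank_eq (fun y hy ↦ ?_) ?_
  · exact Submodule.mem_span_singleton.2 (hW x y hx (hL x hxL x hxL) (hL y hy y hy) (hL x hxL y hy))
  · rw [hdim, finrank_restrictScalars_span_singleton hx]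

variable [Algebra.IsSeparable F K]

-- With `a = H(y, z) / H(y, x)` and `b = H(x, z) / H(x, y)`, which are quotients of skew elements
-- and so lie in `F`, the vector `z - ax - by` is isotropic and `H`-orthogonal to `x` and `y`.
lemma exists_eq_smul_add_smul (hσ : IsConjugation σ) (hH : H.IsSymm) (hQ : IsDiagonalOf Q H)
    (hW : WittIndexLEOne H) {x y z : V} (hx : Q x = 0) (hy : Q y = 0) (hz : Q z = 0)
    (hxy : polar Q x y = 0) (hzx : polar Q z x = 0) (hzy : polar Q z y = 0) (hne : H x y ≠ 0) :
    ∃ a b : F, z = a • x + b • y := by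
  have hsymm (u v : V) : σ (H u v) = H v u := hH.eq u v
  have skew {u v : V} (huv : polar Q u v = 0) : H v u = -H u v := by
    rw [← hsymm, eq_neg_iff_add_eq_zero, add_comm, ← hσ, ← polar_eq_trace hσ hH hQ, huv, map_zero]
  have hne' : H y x ≠ 0 := by simpa [skew hxy] using hne
  obtain ⟨a, ha⟩ := hσ.exists_algebraMap_eq (a := H y z / H y x) (by
    rw [map_div₀, hsymm, hsymm, skew hzy, skew hxy, neg_div_neg_eq])
  obtain ⟨b, hb⟩ := hσ.exists_algebraMap_eq (a := H x z / H x y) (by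
    rw [map_div₀, hsymm, hsymm, skew hzx, skew hxy, div_neg, neg_div])
  have hxx := (singular_iff_isotropic hQ x).1 hx
  have hyy := (singular_iff_isotropic hQ y).1 hy
  set w := z - (a • x + b • y) with hw
  have hxw : H x w = 0 := by
    rw [hw, ← algebraMap_smul K a x, ← algebraMap_smul K b y, hb]
    simp [hxx, hne]
  have hyw : H y w = 0 := by
    rw [hw, ← algebraMap_smul K a x, ← algebraMap_smul K b y, ha]
    simp [hyy, hne']
  have hww : Q w = 0 := by
    rw [hw, sub_eq_add_neg]
    simp [QuadraticMap.map_add Q, QuadraticMap.map_smul, hx, hy, hz, hzx, hzy,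
      QuadraticMap.polar_comm Q y x, hxy]
  obtain ⟨c, hc⟩ := hW x w (by rintro rfl; simp at hne) hxx
    ((singular_iff_isotropic hQ w).1 hww) hxw
  have hc0 : c = 0 := by simpa [← hc, hne'] using hyw
  exact ⟨a, b, sub_eq_zero.1 (by rw [← hw, ← hc, hc0, zero_smul])⟩

lemma mem_of_isotropic (hσ : IsConjugation σ) (hH : H.IsSymm) (hQ : IsDiagonalOf Q H)
    (hW : WittIndexLEOne H) {L : Submodule F V} (hdim : Module.finrank F L = Module.finrank F K)
    (hL : ∀ x ∈ L, ∀ y ∈ L, H x y = 0) {z : V} (hz : Q z = 0)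
    (hzL : ∀ v ∈ L, polar Q z v = 0) : z ∈ L := by
  obtain ⟨x, hxL, hx⟩ := L.exists_mem_ne_zero_of_ne_bot (by
    rintro rfl
    simp [Module.finrank_pos.ne] at hdim)
  have hspan := eq_restrictScalars_span_singleton hW hL hdim hxL hx
  have hzx : H z x = 0 := eq_zero_of_forall_trace_mul_eq_zero (F := F) fun c ↦ by
    rw [← smul_eq_mul, ← map_smul, ← polar_eq_trace hσ hH hQ]
    exact hzL _ (hspan ▸ Submodule.smul_mem _ c (Submodule.mem_span_singleton_self x))
  rw [hspan]
  exact Submodule.mem_span_singleton.2 (hW x z hx (hL x hxL x hxL)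
    ((singular_iff_isotropic hQ z).1 hz) (hH.eq_iff.1 hzx))

lemma wittIndexLETwo_of_isDiagonalOf (hσ : IsConjugation σ) (hH : H.IsSymm)
    (hQ : IsDiagonalOf Q H) (hW : WittIndexLEOne H) (hdim : Module.finrank F K = 2) :
    WittIndexLETwo Q := by
  intro L hL hLdim z hz hzL
  by_cases hiso : ∀ x ∈ L, ∀ y ∈ L, H x y = 0
  · exact mem_of_isotropic hσ hH hQ hW (hLdim.trans hdim.symm) hiso hz hzL
  · push Not at hiso
    obtain ⟨x, hx, y, hy, hxy⟩ := hiso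
    obtain ⟨a, b, rfl⟩ := exists_eq_smul_add_smul hσ hH hQ hW (hL x hx) (hL y hy) hz
      (hL.polar_eq_zero hx hy) (hzL x hx) (hzL y hy) hxy
    exact L.add_mem (L.smul_mem a hx) (L.smul_mem b hy)

end WittIndex

lemma isSpread_isotropicPointOfSingular [Fintype (SingularPoint Q)] (hQ : IsDiagonalOf Q H)
    (hdim : Module.finrank F K = 2) :
    IsSpread (quadricLines Q) (isotropicPointOfSingular hQ) := by
  refine fun r ↦ ⟨(Submodule.span K {r.1.rep}).restrictScalars F, fun v hv ↦ ?_, ?_, ?_⟩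
  · obtain ⟨c, rfl⟩ := Submodule.mem_span_singleton.1 hv
    exact (singular_iff_isotropic hQ _).2 (isotropic_smul r.2 c)
  · rw [finrank_restrictScalars_span_singleton r.1.rep_nonzero, hdim]
  · ext p
    simp [mem_singularPointsIn, isotropicPointOfSingular_eq_iff]

end HermitianForm

section HermitianCurve

lemma card_fiberProduct_ker {F V W X : Type*} [Ring F] [AddCommGroup V] [Module F V]
    [AddCommGroup W] [Module F W] {φ : V →ₗ[F] W} (hφ : Function.Surjective φ) (f : X → W) :
    Nat.card {p : X × V // φ p.2 = f p.1} = Nat.card X * Nat.card (LinearMap.ker φ) := by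
  choose g hg using hφ
  rw [← Nat.card_prod]
  exact Nat.card_congr
    { toFun p := (p.1.1, ⟨p.1.2 - g (f p.1.1), by simp [p.2, hg]⟩)
      invFun p := ⟨(p.1, p.2 + g (f p.1)), by simp [hg]⟩
      left_inv p := by simp
      right_inv p := by simp }

variable {F K : Type*} [Field F] [Field K] [Algebra F K]

lemma card_ker_trace [Finite K] (hdim : Module.finrank F K = 2) :
    Nat.card (LinearMap.ker (Algebra.trace F K)) = Nat.card F := by
  have := Finite.of_injective _ (algebraMap F K).injective
  have hker := Module.Dual.finrank_ker_add_one_of_ne_zero (Algebra.trace_ne_zero F K)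
  rw [Module.natCard_eq_pow_finrank (K := F), show Module.finrank F _ = 1 by omega, pow_one]

/-- The Hermitian form `σ(x₀) y₂ + σ(x₁) y₁ + σ(x₂) y₀` of the Hermitian curve `H(2, q²)`. -/
def hermitianCurveForm (σ : K →ₐ[F] K) : K × K × K →ₛₗ[(σ : K →+* K)] K × K × K →ₗ[K] K :=
  LinearMap.mk₂'ₛₗ _ _ (fun x y ↦ σ x.1 * y.2.2 + σ x.2.1 * y.2.1 + σ x.2.2 * y.1)
    (fun x x' y ↦ by simp only [Prod.fst_add, Prod.snd_add, map_add]; ring)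
    (fun c x y ↦ by
      simp only [Prod.smul_fst, Prod.smul_snd, smul_eq_mul, map_mul, RingHom.coe_coe]; ring)
    (fun x y y' ↦ by simp only [Prod.fst_add, Prod.snd_add]; ring)
    (fun c x y ↦ by
      simp only [Prod.smul_fst, Prod.smul_snd, smul_eq_mul, RingHom.id_apply]; ring)

variable {σ : K →ₐ[F] K}

lemma hermitianCurveForm_apply (x y : K × K × K) : hermitianCurveForm σ x y =
    σ x.1 * y.2.2 + σ x.2.1 * y.2.1 + σ x.2.2 * y.1 := rfl

lemma hermitianCurveForm_isSymm (hσ : IsConjugation σ) : (hermitianCurveForm σ).IsSymm where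
  eq x y := by
    simp only [hermitianCurveForm_apply, RingHom.coe_coe, map_add, map_mul, hσ.apply_apply]
    ring

lemma eq_zero_of_isotropic_of_fst_eq_zero {x : K × K × K}
    (hx : hermitianCurveForm σ x x = 0) (hx₀ : x.1 = 0) : x.2.1 = 0 := by
  simpa [hermitianCurveForm_apply, hx₀] using hx

lemma hermitianCurveForm_wittIndexLEOne (hσ : IsConjugation σ) :
    WittIndexLEOne (hermitianCurveForm σ) := by
  intro x y hx hxx hyy hxy
  have hyx : hermitianCurveForm σ y x = 0 := (hermitianCurveForm_isSymm hσ).eq_iff.1 hxy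
  by_cases hx₀ : x.1 = 0
  · have hx₁ : x.2.1 = 0 := eq_zero_of_isotropic_of_fst_eq_zero hxx hx₀
    have hx₂ : x.2.2 ≠ 0 := fun hx₂ ↦ hx (Prod.ext hx₀ (Prod.ext hx₁ hx₂))
    have hy₀ : y.1 = 0 := by simpa [hermitianCurveForm_apply, hx₀, hx₁, hx₂] using hxy
    have hy₁ : y.2.1 = 0 := eq_zero_of_isotropic_of_fst_eq_zero hyy hy₀
    exact ⟨y.2.2 / x.2.2, by ext <;> simp [hx₀, hx₁, hx₂, hy₀, hy₁]⟩
  · set z := y - (y.1 / x.1) • x with hz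
    have hzz : hermitianCurveForm σ z z = 0 := by simp [hz, hxx, hyy, hxy, hyx]
    have hxz : hermitianCurveForm σ x z = 0 := by simp [hz, hxx, hxy]
    have hz₀ : z.1 = 0 := by simp [hz, hx₀]
    have hz₁ : z.2.1 = 0 := eq_zero_of_isotropic_of_fst_eq_zero hzz hz₀
    have hz₂ : z.2.2 = 0 := by simpa [hermitianCurveForm_apply, hz₀, hz₁, hx₀] using hxz
    exact ⟨y.1 / x.1, (sub_eq_zero.1 (Prod.ext hz₀ (Prod.ext hz₁ hz₂))).symm⟩

variable {Q : QuadraticForm F (K × K × K)}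

lemma hermitianCurveForm_affine_eq_zero_iff (hσ : IsConjugation σ)
    (hQ : IsDiagonalOf Q (hermitianCurveForm σ)) (b c : K) :
    hermitianCurveForm σ (1, b, c) (1, b, c) = 0 ↔
      Algebra.trace F K c = -Q (0, b, 0) := by
  rw [← (algebraMap F K).injective.eq_iff, hσ, map_neg, hQ, eq_neg_iff_add_eq_zero]
  simp only [hermitianCurveForm_apply, map_one, map_zero]
  ring_nf

lemma mk_fst_eq_one_injective {u v : K × K} (h : Projectivization.mk K ((1 : K), u) (by simp) =
    Projectivization.mk K ((1 : K), v) (by simp)) : u = v := by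
  obtain ⟨a, ha⟩ := (Projectivization.mk_eq_mk_iff' ..).1 h
  simp only [Prod.smul_mk, Prod.mk.injEq, smul_eq_mul, mul_one] at ha
  rw [← ha.2, ha.1, one_smul]

/-- The parametrisation of the Hermitian curve by its affine points, in the chart `x₀ = 1`, and its
single point at infinity, the value at `none`. -/
noncomputable def isotropicPointOfAffine (σ : K →ₐ[F] K) :
    Option {p : K × K // hermitianCurveForm σ (1, p) (1, p) = 0} →
      IsotropicPoint (hermitianCurveForm σ)
  | none => ⟨Projectivization.mk K (0, 0, 1) (by simp),
      (mk_rep_isotropic_iff _).2 (by simp [hermitianCurveForm_apply])⟩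
  | some p => ⟨Projectivization.mk K (1, p.1) (by simp), (mk_rep_isotropic_iff _).2 p.2⟩

lemma isotropicPointOfAffine_injective : Function.Injective (isotropicPointOfAffine σ) := by
  rintro (_ | p) (_ | r) h
  · rfl
  · obtain ⟨a, ha⟩ := (Projectivization.mk_eq_mk_iff' ..).1 (congrArg Subtype.val h)
    have ha₀ : a = 0 := by simpa using congrArg Prod.fst ha
    simpa [ha₀] using congrArg (fun v ↦ v.2.2) ha
  · obtain ⟨a, ha⟩ := (Projectivization.mk_eq_mk_iff' ..).1 (congrArg Subtype.val h)
    simp at ha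
  · exact congrArg some (Subtype.ext (mk_fst_eq_one_injective (congrArg Subtype.val h)))

lemma isotropicPointOfAffine_surjective : Function.Surjective (isotropicPointOfAffine σ) := by
  intro r
  set x := r.1.rep with hx
  by_cases hx₀ : x.1 = 0
  · have hx₁ : x.2.1 = 0 := eq_zero_of_isotropic_of_fst_eq_zero r.2 hx₀
    refine ⟨none, Subtype.ext (eq_mk_of_rep_eq_smul _ (a := x.2.2) ?_).symm⟩
    ext <;> simp [← hx, hx₀, hx₁]
  · have hsmul : x.1⁻¹ • x = (1, x.1⁻¹ • x.2) := Prod.ext (by simp [hx₀]) rfl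
    refine ⟨some ⟨x.1⁻¹ • x.2, hsmul ▸ isotropic_smul r.2 _⟩, Subtype.ext ?_⟩
    refine (eq_mk_of_rep_eq_smul _ (a := x.1) ?_).symm
    rw [← hsmul, smul_inv_smul₀ hx₀]

lemma card_isotropicPoint_hermitianCurveForm [Finite K] (hσ : IsConjugation σ)
    (hdim : Module.finrank F K = 2) :
    Nat.card (IsotropicPoint (hermitianCurveForm σ)) = Nat.card F ^ 3 + 1 := by
  have := Finite.of_injective _ (algebraMap F K).injective
  obtain ⟨Q, hQ⟩ := exists_isDiagonalOf hσ (hermitianCurveForm_isSymm hσ)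
  rw [← Nat.card_eq_of_bijective _
    ⟨isotropicPointOfAffine_injective (σ := σ), isotropicPointOfAffine_surjective⟩,
    Finite.card_option]
  simp_rw [hermitianCurveForm_affine_eq_zero_iff hσ hQ]
  rw [card_fiberProduct_ker (Algebra.trace_surjective F K) fun b ↦ -Q (0, b, 0),
    card_ker_trace hdim, Module.natCard_eq_pow_finrank (K := F) (V := K), hdim, ← pow_succ]

end HermitianCurve

lemma isConjugation_frob (F : Type*) [Field F] [Finite F] (p : ℕ) [Fact p.Prime] [CharP F p] :
    IsConjugation (FiniteField.Extension.frob F p 2).toAlgHom := by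
  intro a
  rw [FiniteField.algebraMap_trace_eq_sum_pow, FiniteField.finrank_extension]
  simp [sum_range_succ]

theorem exists_isGeneralizedQuadrangle_isSpread {q : ℕ} (hq : IsPrimePow q) :
    ∃ (V C : Type) (_ : Fintype V) (_ : Fintype C) (G : SimpleGraph V) (lines : Set (Finset V))
      (c : V → C), IsGeneralizedQuadrangle G lines q ∧ IsSpread lines c ∧
        Fintype.card C = q ^ 3 + 1 := by
  obtain ⟨p, n, hp, hn, rfl⟩ := (isPrimePow_nat_iff q).1 hq
  have : Fact p.Prime := ⟨hp⟩
  let F := GaloisField p n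
  let K := FiniteField.Extension F p 2
  have hF : Nat.card F = p ^ n := GaloisField.card p n hn.ne'
  have hdim : Module.finrank F K = 2 := FiniteField.finrank_extension F p 2
  let σ : K →ₐ[F] K := (FiniteField.Extension.frob F p 2).toAlgHom
  have hσ : IsConjugation σ := isConjugation_frob F p
  have hH := hermitianCurveForm_isSymm hσ
  obtain ⟨Q, hQ⟩ := exists_isDiagonalOf hσ hH
  have hQ2 : WittIndexLETwo Q :=
    wittIndexLETwo_of_isDiagonalOf hσ hH hQ (hermitianCurveForm_wittIndexLEOne hσ) hdim
  let _ : Fintype (SingularPoint Q) := Fintype.ofFinite _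
  refine ⟨SingularPoint Q, IsotropicPoint (hermitianCurveForm σ), inferInstance,
    Fintype.ofFinite _, quadricCollinearityGraph Q, quadricLines Q, isotropicPointOfSingular hQ,
    hF ▸ isGeneralizedQuadrangle_quadric hQ2, isSpread_isotropicPointOfSingular hQ hdim, ?_⟩
  rw [Fintype.card_eq_nat_card, card_isotropicPoint_hermitianCurveForm hσ hdim, hF]

theorem IsGeneralizedQuadrangle.exists_packing_of_isSpread {V C : Type*} [Fintype V] [Fintype C]
    {G : SimpleGraph V} {lines : Set (Finset V)} {c : V → C} {s t d : ℕ}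
    (hG : IsGeneralizedQuadrangle G lines s) (hs : 2 ≤ s) (hc : IsSpread lines c)
    (hC : Fintype.card C = s * t + 1) (hd : d * (s + t) = s ^ 2 * (s * t + 1)) :
    ∃ P : Finset (EuclideanSpace ℝ (Fin d)), (∀ x ∈ P, ∀ y ∈ P, x ≠ y → 1 ≤ dist x y) ∧
      (unitDistanceGraph (P : Set (EuclideanSpace ℝ (Fin d)))).IsSRGWith
        ((s + 1) * (s * t + 1)) (s ^ 2 * t) (s * (s - 1) * t + t - s) (s * (s - 1) * t) ∧
      (unitDistanceGraph (P : Set (EuclideanSpace ℝ (Fin d)))).chromaticNumber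
        = ((s * t + 1 : ℕ) : ℕ∞) := by
  have hs0 : 0 < s := by omega
  obtain ⟨P, hP, ⟨e⟩⟩ :=
    exists_finset_compl_iso_unitDistanceGraph hs (hG.isSRGWith_of_isSpread hs0 hc hC) hd
  refine ⟨P, hP, isSRGWith_of_iso e (hG.compl_isSRGWith_of_isSpread hs0 hc hC), ?_⟩
  rw [← SimpleGraph.chromaticNumber_congr e, hG.compl_chromaticNumber_of_isSpread hc, hC]

/-- For every prime power `q` there is a unit ball packing in dimension
`q^3 - q^2 + q` (given by a finite set of points with pairwise distances at
least `1`) whose tangency graph (the unit-distance graph) is strongly regular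
with parameters `((q+1)(q^3+1), q^4, q(q-1)(q^2+1), (q-1)q^3)` and has
chromatic number exactly `q^3 + 1`. -/
theorem exists_unit_ball_packing_srg_of_primePow (q : ℕ) (hq : IsPrimePow q) :
    ∃ P : Finset (EuclideanSpace ℝ (Fin (q ^ 3 - q ^ 2 + q))),
      (∀ x ∈ P, ∀ y ∈ P, x ≠ y → 1 ≤ dist x y) ∧
      (unitDistanceGraph (P : Set (EuclideanSpace ℝ (Fin (q ^ 3 - q ^ 2 + q))))).IsSRGWith
        ((q + 1) * (q ^ 3 + 1)) (q ^ 4) (q * (q - 1) * (q ^ 2 + 1)) ((q - 1) * q ^ 3) ∧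
      (unitDistanceGraph (P : Set (EuclideanSpace ℝ (Fin (q ^ 3 - q ^ 2 + q))))).chromaticNumber
        = ((q ^ 3 + 1 : ℕ) : ℕ∞) := by
  obtain ⟨V, C, _, _, G, lines, c, hG, hc, hC⟩ := exists_isGeneralizedQuadrangle_isSpread hq
  have hq1 : 1 ≤ q := hq.one_lt.le
  have hcube : q ^ 3 = q * q ^ 2 := by ring
  have hdim : (q ^ 3 - q ^ 2 + q) * (q + q ^ 2) = q ^ 2 * (q * q ^ 2 + 1) := by
    zify [Nat.pow_le_pow_right hq1 (show 2 ≤ 3 by norm_num)]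
    ring
  have hadj : q * (q - 1) * q ^ 2 + q ^ 2 - q = q * (q - 1) * (q ^ 2 + 1) := by
    rw [add_tsub_assoc_of_le (Nat.le_self_pow two_ne_zero q), sq, ← Nat.mul_sub_one]
    ring
  have hnonadj : q * (q - 1) * q ^ 2 = (q - 1) * q ^ 3 := by ring
  have hdeg : q ^ 2 * q ^ 2 = q ^ 4 := by ring
  have := hG.exists_packing_of_isSpread hq.two_le hc (hC.trans (by rw [hcube])) hdim
  rwa [hadj, hnonadj, hdeg, ← hcube] at this
end

section
/- Let G be a k-regular simple graph on a finite nonempty vertex set, let s be the least eigenvalue of its real adjacency matrix, and suppose s < 0 (e.g. G has at least one edge). Then the chromatic number of G is at least 1 − k/s. -/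
open scoped Classical

/-- `μ` is an eigenvalue of the real adjacency matrix of the graph `G`. -/
def IsAdjEigenvalue {V : Type*} [Fintype V] (G : SimpleGraph V) (μ : ℝ) : Prop :=
  ∃ x : V → ℝ, x ≠ 0 ∧ Matrix.mulVec (SimpleGraph.adjMatrix ℝ G) x = μ • x

/-!
Split a vector `x` into its restrictions `xᵢ` to the colour classes of a colouring with `m` colours.
The form `q y = yᵀ (A - s) y` is positive semidefinite, so `q (∑ xᵢ) ≤ m ∑ q xᵢ`. The diagonal
blocks of `A` vanish, hence `q xᵢ = -s ‖xᵢ‖²` and the inequality becomes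
`xᵀ A x ≤ (m - 1) (-s) ‖x‖²`. For an eigenvector `x` with eigenvalue `t` this is `1 - t / s ≤ m`,
and a `k`-regular graph has the eigenvalue `t = k`.
-/

open Finset Matrix

section Indicator

variable {V α : Type*}

theorem sum_indicator_fiber [Fintype α] {M : Type*} [AddCommMonoid M] (C : V → α) (x : V → M) :
    ∑ i, (C ⁻¹' {i}).indicator x = x := by
  ext v
  simp [Set.indicator_apply]

variable {R : Type*} [NonUnitalNonAssocSemiring R] [Fintype V]

theorem sum_indicator_fiber_dotProduct_self [Fintype α] (C : V → α) (x : V → R) :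
    ∑ i, (C ⁻¹' {i}).indicator x ⬝ᵥ (C ⁻¹' {i}).indicator x = x ⬝ᵥ x := by
  simp only [dotProduct]
  rw [sum_comm]
  simp [Set.indicator_apply]

theorem indicator_dotProduct_mulVec_indicator_eq_zero {A : Matrix V V R} {S : Set V}
    (hA : ∀ u ∈ S, ∀ v ∈ S, A u v = 0) (x : V → R) :
    S.indicator x ⬝ᵥ A *ᵥ S.indicator x = 0 := by
  simp only [dotProduct, mulVec, mul_sum]
  refine sum_eq_zero fun u _ ↦ sum_eq_zero fun v _ ↦ ?_
  by_cases hu : u ∈ S <;> by_cases hv : v ∈ S <;> simp [hu, hv, hA]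

end Indicator

section QuadraticForm

variable {R : Type*} [CommRing R] [LinearOrder R] [IsStrictOrderedRing R]

theorem bilinForm_sum_self_le_card_mul_sum {ι M : Type*} [AddCommGroup M] [Module R M]
    {B : LinearMap.BilinForm R M} (hB : B.IsNonneg) (I : Finset ι) (x : ι → M) :
    B (∑ i ∈ I, x i) (∑ i ∈ I, x i) ≤ #I * ∑ i ∈ I, B (x i) (x i) := by
  have sum_sub_sub : ∑ i ∈ I, ∑ j ∈ I, B (x i - x j) (x i - x j) =
      2 * (#I * ∑ i ∈ I, B (x i) (x i) - B (∑ i ∈ I, x i) (∑ i ∈ I, x i)) := by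
    have sum_swap : ∑ i ∈ I, ∑ j ∈ I, B (x j) (x i) = ∑ i ∈ I, ∑ j ∈ I, B (x i) (x j) :=
      sum_comm
    simp only [map_sub, map_sum, LinearMap.sub_apply, LinearMap.sum_apply, sum_sub_distrib,
      sum_const, nsmul_eq_mul, ← mul_sum, sum_swap]
    ring
  have sum_sub_sub_nonneg : 0 ≤ ∑ i ∈ I, ∑ j ∈ I, B (x i - x j) (x i - x j) :=
    sum_nonneg fun i _ ↦ sum_nonneg fun j _ ↦ hB.nonneg _
  linarith

theorem dotProduct_mulVec_le_of_eq_zero_on_fibers {V α : Type*} [Fintype V] [Fintype α]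
    {A : Matrix V V R} {s : R} (hs : ∀ y : V → R, s * (y ⬝ᵥ y) ≤ y ⬝ᵥ A *ᵥ y)
    {C : V → α} (hC : ∀ u v, C u = C v → A u v = 0) (x : V → R) :
    x ⬝ᵥ A *ᵥ x ≤ (1 - Fintype.card α) * s * (x ⬝ᵥ x) := by
  let B := toBilin' (A - s • 1)
  have B_self (y : V → R) : B y y = y ⬝ᵥ A *ᵥ y - s * (y ⬝ᵥ y) := by
    simp [B, toBilin'_apply']
  have hB : B.IsNonneg := ⟨fun y ↦ by simpa [B_self] using hs y⟩
  have B_class (i : α) : B ((C ⁻¹' {i}).indicator x) ((C ⁻¹' {i}).indicator x) =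
      -s * ((C ⁻¹' {i}).indicator x ⬝ᵥ (C ⁻¹' {i}).indicator x) := by
    rw [B_self, indicator_dotProduct_mulVec_indicator_eq_zero]
    · ring
    · exact fun u hu v hv ↦ hC u v (hu.trans hv.symm)
  have hsum := bilinForm_sum_self_le_card_mul_sum hB univ fun i ↦ (C ⁻¹' {i}).indicator x
  simp only [sum_indicator_fiber, B_class, ← mul_sum, sum_indicator_fiber_dotProduct_self, B_self,
    card_univ] at hsum
  linarith

end QuadraticForm

open scoped MatrixOrder in
theorem mul_dotProduct_le_dotProduct_mulVec_of_le_spectrum {V : Type*} [Fintype V]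
    {A : Matrix V V ℝ} (hA : A.IsHermitian) {s : ℝ} (hs : ∀ t ∈ spectrum ℝ A, s ≤ t)
    (x : V → ℝ) : s * (x ⬝ᵥ x) ≤ x ⬝ᵥ A *ᵥ x := by
  have hpos : (A - algebraMap ℝ _ s).PosSemidef :=
    (algebraMap_le_iff_le_spectrum hA.isSelfAdjoint).mpr hs
  simpa [Algebra.algebraMap_eq_smul_one, sub_mulVec, smul_mulVec, dotProduct_sub]
    using hpos.dotProduct_mulVec_nonneg x

section Graph

variable {V : Type*} [Fintype V] {G : SimpleGraph V}

theorem isAdjEigenvalue_iff_mem_spectrum {μ : ℝ} :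
    IsAdjEigenvalue G μ ↔ μ ∈ spectrum ℝ (G.adjMatrix ℝ) := by
  rw [← spectrum_toLin', ← Module.End.hasEigenvalue_iff_mem_spectrum]
  constructor
  · rintro ⟨x, hx, hAx⟩
    exact Module.End.hasEigenvalue_of_hasEigenvector
      ⟨Module.End.mem_eigenspace_iff.mpr (by simpa using hAx), hx⟩
  · intro hμ
    obtain ⟨x, hx⟩ := hμ.exists_hasEigenvector
    exact ⟨x, hx.2, by simpa using hx.apply_eq_smul⟩

theorem isAdjEigenvalue_of_isRegularOfDegree [Nonempty V] {k : ℕ}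
    (hreg : G.IsRegularOfDegree k) : IsAdjEigenvalue G k := by
  refine ⟨Function.const V 1, by simp, ?_⟩
  ext v
  simpa using SimpleGraph.adjMatrix_mulVec_const_apply_of_regular (α := ℝ) (a := 1) hreg

theorem one_sub_div_le_card_of_coloring {α : Type*} [Fintype α] (C : G.Coloring α) {s t : ℝ}
    (ht : IsAdjEigenvalue G t) (hmin : ∀ r : ℝ, IsAdjEigenvalue G r → s ≤ r) (hneg : s < 0) :
    1 - t / s ≤ Fintype.card α := by
  obtain ⟨x, hx, hAx⟩ := ht
  have rayleigh_ge : ∀ y : V → ℝ, s * (y ⬝ᵥ y) ≤ y ⬝ᵥ G.adjMatrix ℝ *ᵥ y :=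
    mul_dotProduct_le_dotProduct_mulVec_of_le_spectrum (G.isHermitian_adjMatrix ℝ)
      fun r hr ↦ hmin r (isAdjEigenvalue_iff_mem_spectrum.mpr hr)
  have adj_eq_zero (u v : V) (huv : C u = C v) : G.adjMatrix ℝ u v = 0 := by
    simpa using fun hadj ↦ C.valid hadj huv
  have rayleigh_le := dotProduct_mulVec_le_of_eq_zero_on_fibers rayleigh_ge adj_eq_zero x
  rw [hAx, dotProduct_smul, smul_eq_mul] at rayleigh_le
  have hxx : 0 < x ⬝ᵥ x := by simpa using dotProduct_star_self_pos_iff.mpr hx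
  have ht_le : t ≤ (1 - Fintype.card α) * s := le_of_mul_le_mul_right rayleigh_le hxx
  have := (le_div_iff_of_neg hneg).mpr ht_le
  linarith

end Graph

theorem hoffman_chromatic_bound_general {V : Type*} [Fintype V] (G : SimpleGraph V) (s t : ℝ)
    (ht : IsAdjEigenvalue G t) (hmin : ∀ r : ℝ, IsAdjEigenvalue G r → s ≤ r) (hneg : s < 0) :
    1 - t / s ≤ (G.chromaticNumber.toNat : ℝ) := by
  obtain ⟨C⟩ : G.Colorable G.chromaticNumber.toNat :=
    SimpleGraph.colorable_chromaticNumber G.colorable_of_fintype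
  simpa using one_sub_div_le_card_of_coloring C ht hmin hneg

/-- Hoffman's eigenvalue bound: if `G` is a `k`-regular graph on a finite
nonempty vertex set and `s < 0` is the least eigenvalue of its real adjacency
matrix, then the chromatic number of `G` is at least `1 - k/s`. -/
theorem hoffman_chromatic_bound {V : Type*} [Fintype V] [Nonempty V]
    (G : SimpleGraph V) (k : ℕ) (hreg : G.IsRegularOfDegree k) (s : ℝ)
    (hs : IsAdjEigenvalue G s) (hmin : ∀ t : ℝ, IsAdjEigenvalue G t → s ≤ t)
    (hneg : s < 0) :
    (1 - (k : ℝ) / s) ≤ (G.chromaticNumber.toNat : ℝ) :=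
  hoffman_chromatic_bound_general G s k (isAdjEigenvalue_of_isRegularOfDegree hreg) hmin hneg
end

section
/- Let G be a connected, non-complete strongly regular graph with parameters (v, k, λ, μ) with μ > 0. Set δ = √((λ−μ)^2 + 4(k−μ)), r = (λ−μ+δ)/2 and s = (λ−μ−δ)/2. Then the real adjacency matrix of G has exactly the eigenvalues k, r and s, with multiplicities 1, f and g respectively, where Δ = ((v−1)(μ−λ) − 2k)/δ, f = (v−1+Δ)/2 and g = (v−1−Δ)/2. -/
open scoped Classical

/-- The eigenspace of the real adjacency matrix of `G` for the value `μ`. -/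
noncomputable def adjEigenspace {V : Type*} [Fintype V] (G : SimpleGraph V) (μ : ℝ) :
    Submodule ℝ (V → ℝ) :=
  Module.End.eigenspace (Matrix.toLin' (SimpleGraph.adjMatrix ℝ G)) μ

/-!
Write `A` for the adjacency matrix and `J` for the all-ones matrix. Since `r` and `s` are the roots
of `X² - (λ - μ) X - (k - μ)`, strong regularity says `(A - r)(A - s) = μ J`. As `A J = k J`, the
matrix `A` is annihilated by `(X - k)(X - r)(X - s)`, which has distinct roots. Hence `A` is
diagonalizable and `tr p(A) = p(k) m_k + p(r) m_r + p(s) m_s` for every polynomial `p`, where `m_t`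
is the multiplicity of `t`. The choices `p = (X - r)(X - s)`, `p = X - s` and `p = X - r` determine
the three multiplicities; those of `r` and `s` do not vanish because `(r + 1)(s + 1) = λ + 1 - k`
is nonzero.
-/

section DiagonalizableEndomorphism

open Module Polynomial

variable {K M : Type*} [Field K] [AddCommGroup M] [Module K M]

theorem biSup_eigenspace_eq_ker_aeval_prod (f : End K M) (S : Finset K) :
    ⨆ t ∈ S, f.eigenspace t = LinearMap.ker (aeval f (∏ t ∈ S, (X - C t))) := by
  induction S using Finset.induction_on with
  | empty => simp [End.one_eq_id]
  | insert a S ha ih =>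
    have hcoprime : IsCoprime (X - C a) (∏ t ∈ S, (X - C t)) :=
      IsCoprime.prod_right fun t ht ↦
        isCoprime_X_sub_C_of_isUnit_sub (sub_ne_zero.2 (ne_of_mem_of_not_mem ht ha).symm).isUnit
    have heigen : f.eigenspace a = LinearMap.ker (aeval f (X - C a)) := by
      simp [End.eigenspace_def, Algebra.algebraMap_eq_smul_one]
    rw [Finset.iSup_insert, Finset.prod_insert ha, ih, heigen,
      sup_ker_aeval_eq_ker_aeval_mul_of_coprime f hcoprime]

theorem isInternal_eigenspace_of_aeval_prod_eq_zero {f : End K M} {S : Finset K}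
    (hf : aeval f (∏ t ∈ S, (X - C t)) = 0) :
    DirectSum.IsInternal fun t : S ↦ f.eigenspace (t : K) := by
  refine DirectSum.isInternal_submodule_of_iSupIndep_of_iSup_eq_top
    (f.eigenspaces_iSupIndep.comp Subtype.val_injective) ?_
  rw [iSup_subtype, biSup_eigenspace_eq_ker_aeval_prod, hf, LinearMap.ker_zero]

theorem trace_aeval_restrict_eigenspace [FiniteDimensional K M] (f : End K M) (p : K[X])
    (t : K) (hp : Set.MapsTo (aeval f p) (f.eigenspace t) (f.eigenspace t)) :
    LinearMap.trace K (f.eigenspace t) ((aeval f p).restrict hp) =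
      p.eval t * finrank K (f.eigenspace t) := by
  have hscalar : (aeval f p).restrict hp = p.eval t • LinearMap.id := by
    ext x
    exact End.aeval_apply_of_mem_apply_eq_smul (End.mem_eigenspace_iff.1 x.2)
  rw [hscalar, map_smul, LinearMap.trace_id, smul_eq_mul]

theorem trace_aeval_eq_sum_eval_mul_finrank [FiniteDimensional K M] {f : End K M} {S : Finset K}
    (hf : aeval f (∏ t ∈ S, (X - C t)) = 0) (p : K[X]) :
    LinearMap.trace K M (aeval f p) = ∑ t ∈ S, p.eval t * finrank K (f.eigenspace t) := by
  have hmaps (t : K) : Set.MapsTo (aeval f p) (f.eigenspace t) (f.eigenspace t) := fun x hx ↦ by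
    rw [End.aeval_apply_of_mem_apply_eq_smul (End.mem_eigenspace_iff.1 hx)]
    exact Submodule.smul_mem _ _ hx
  rw [LinearMap.trace_eq_sum_trace_restrict (isInternal_eigenspace_of_aeval_prod_eq_zero hf)
    fun t ↦ hmaps t]
  simp only [trace_aeval_restrict_eigenspace]
  exact Finset.sum_coe_sort S fun t ↦ p.eval t * (finrank K (f.eigenspace t) : K)

theorem isRoot_of_hasEigenvalue_of_aeval_eq_zero {f : End K M} {t : K} (ht : f.HasEigenvalue t)
    {p : K[X]} (hp : aeval f p = 0) : p.IsRoot t := by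
  obtain ⟨x, hx⟩ := ht.exists_hasEigenvector
  have hx_smul : p.eval t • x = 0 := by
    rw [← End.aeval_apply_of_hasEigenvector hx, hp, LinearMap.zero_apply]
  exact (smul_eq_zero.1 hx_smul).resolve_right hx.2

theorem hasEigenvalue_of_finrank_eigenspace_ne_zero {f : End K M} {t : K}
    (h : finrank K (f.eigenspace t) ≠ 0) : f.HasEigenvalue t :=
  End.hasEigenvalue_iff.2 fun hbot ↦ h (by rw [hbot, finrank_bot])

theorem aeval_toLin' {n : Type*} [Fintype n] [DecidableEq n] (A : Matrix n n K) (p : K[X]) :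
    aeval (Matrix.toLin' A) p = Matrix.toLin' (aeval A p) :=
  aeval_algHom_apply (Matrix.toLinAlgEquiv' : Matrix n n K ≃ₐ[K] _).toAlgHom A p

end DiagonalizableEndomorphism

section StronglyRegularGraph

open Module Polynomial

variable {V : Type*} [Fintype V] {G : SimpleGraph V} [DecidableRel G.Adj] {v k ℓ μ : ℕ}

theorem add_one_lt_degree_of_isSRGWith (hG : G.IsSRGWith v k ℓ μ) (hG_top : G ≠ ⊤) (hμ : 0 < μ) :
    ℓ + 1 < k := by
  obtain ⟨a, b, hab, hadj⟩ := SimpleGraph.ne_top_iff_exists_not_adj.1 hG_top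
  have hkv : k < v - 1 := by
    rw [← hG.regular a, ← hG.card, G.degree_lt_card_sub_one]
    exact fun ha ↦ hadj (ha hab)
  have hparam : k * (k - ℓ - 1) = (v - k - 1) * μ := hG.param_eq G (by lia)
  have hpos : 0 < k * (k - ℓ - 1) := hparam ▸ Nat.mul_pos (by lia) hμ
  have := Nat.pos_of_mul_pos_left hpos
  lia

theorem adjMatrix_mul_of_one_of_regular {R : Type*} [Semiring R] (hG : G.IsRegularOfDegree k) :
    G.adjMatrix R * Matrix.of 1 = (k : R) • Matrix.of 1 := by
  ext a b
  simp [SimpleGraph.adjMatrix_mul_apply, hG.degree_eq]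

variable [DecidableEq V]

theorem adjMatrix_sq_of_isSRGWith {R : Type*} [CommRing R] (hG : G.IsSRGWith v k ℓ μ) :
    G.adjMatrix R ^ 2 =
      ((ℓ : R) - μ) • G.adjMatrix R + ((k : R) - μ) • (1 : Matrix V V R) +
        (μ : R) • Matrix.of 1 := by
  have hsum : 1 + G.adjMatrix R + Gᶜ.adjMatrix R = Matrix.of 1 := by
    rw [← G.one_add_adjMatrix_add_compl_adjMatrix_eq_of_one R,
      G.compl_adjMatrix_eq_adjMatrix_compl R]
  rw [hG.matrix_eq, ← hsum]
  simp only [← Nat.cast_smul_eq_nsmul R]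
  module

variable {K : Type*} [Field K]

variable (G) in
/-- The geometric multiplicity of `t` as an eigenvalue of the adjacency matrix of `G` over `K`;
it is `0` when `t` is not an eigenvalue. -/
noncomputable def adjMultiplicity (t : K) : ℕ :=
  finrank K (End.eigenspace (Matrix.toLin' (G.adjMatrix K)) t)

variable {r s : K} (hG : G.IsSRGWith v k ℓ μ) (hsum : r + s = ℓ - μ) (hprod : r * s = μ - k)
include hG hsum hprod

theorem aeval_adjMatrix_quadratic :
    aeval (G.adjMatrix K) ((X - C r) * (X - C s)) = (μ : K) • Matrix.of 1 := by
  have hquadratic : (X - C r) * (X - C s) = X ^ 2 - C ((ℓ : K) - μ) * X - C ((k : K) - μ) := by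
    rw [← hsum, ← neg_sub (μ : K), ← hprod]
    simp only [map_add, map_neg, map_mul]
    ring
  rw [hquadratic]
  simp only [map_sub (aeval _), map_mul (aeval _), map_pow, aeval_X, aeval_C,
    Algebra.algebraMap_eq_smul_one, smul_mul_assoc, one_mul, adjMatrix_sq_of_isSRGWith hG]
  module

theorem aeval_adjMatrix_cubic :
    aeval (G.adjMatrix K) ((X - C (k : K)) * ((X - C r) * (X - C s))) = 0 := by
  rw [map_mul, aeval_adjMatrix_quadratic hG hsum hprod, map_sub, aeval_X, aeval_C, sub_mul,
    mul_smul_comm, adjMatrix_mul_of_one_of_regular hG.regular, ← Algebra.smul_def, smul_comm,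
    sub_self]

omit [DecidableEq V] in
theorem degree_sub_mul_degree_sub (hv : v ≠ 0) : ((k : K) - r) * (k - s) = v * μ := by
  have : Nonempty V := Fintype.card_pos_iff.1 (hG.card ▸ Nat.pos_of_ne_zero hv)
  have hones : Matrix.toLin' (G.adjMatrix K) 1 = (k : K) • 1 := by
    ext a
    simp [hG.regular.degree_eq]
  have hquad := End.aeval_apply_of_mem_apply_eq_smul (p := (X - C r) * (X - C s)) hones
  rw [aeval_toLin', aeval_adjMatrix_quadratic hG hsum hprod] at hquad
  have hentry := congrFun hquad (Classical.arbitrary V)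
  have hcard_mul : (v : K) * μ = (k - r) * (k - s) := by
    simpa [Matrix.mulVec, dotProduct, hG.card] using hentry
  exact hcard_mul.symm

variable (hvμ : (v : K) * μ ≠ 0)
include hvμ

omit [DecidableEq V] in
theorem degree_ne_quadratic_root : (k : K) ≠ r := by
  have hv : v ≠ 0 := by rintro rfl; simp at hvμ
  rintro rfl
  exact hvμ (by rw [← degree_sub_mul_degree_sub hG hsum hprod hv, sub_self, zero_mul])

variable (hrs : r ≠ s)
include hrs

theorem trace_aeval_adjMatrix (p : K[X]) :
    (aeval (G.adjMatrix K) p).trace = p.eval (k : K) * adjMultiplicity G (k : K) +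
      (p.eval r * adjMultiplicity G r + p.eval s * adjMultiplicity G s) := by
  have hkr : (k : K) ≠ r := degree_ne_quadratic_root hG hsum hprod hvμ
  have hks : (k : K) ≠ s :=
    degree_ne_quadratic_root hG (add_comm r s ▸ hsum) (mul_comm r s ▸ hprod) hvμ
  have hk_notMem : (k : K) ∉ ({r, s} : Finset K) := by simp [hkr, hks]
  have hannihilates : aeval (Matrix.toLin' (G.adjMatrix K))
      (∏ t ∈ {(k : K), r, s}, (X - C t)) = 0 := by
    rw [Finset.prod_insert hk_notMem, Finset.prod_pair hrs, aeval_toLin',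
      aeval_adjMatrix_cubic hG hsum hprod, map_zero]
  have htrace := trace_aeval_eq_sum_eval_mul_finrank hannihilates p
  rwa [aeval_toLin', Matrix.trace_toLin'_eq, Finset.sum_insert hk_notMem,
    Finset.sum_pair hrs] at htrace

theorem adjMultiplicity_degree_eq_one : (adjMultiplicity G (k : K) : K) = 1 := by
  have htrace := trace_aeval_adjMatrix hG hsum hprod hvμ hrs ((X - C r) * (X - C s))
  rw [aeval_adjMatrix_quadratic hG hsum hprod] at htrace
  have hmul : (v : K) * μ = (k - r) * (k - s) * adjMultiplicity G (k : K) := by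
    simpa [Matrix.trace, hG.card] using htrace
  have hv : v ≠ 0 := by rintro rfl; simp at hvμ
  rw [degree_sub_mul_degree_sub hG hsum hprod hv] at hmul
  exact (mul_eq_left₀ hvμ).1 hmul.symm

theorem sub_mul_adjMultiplicity : (r - s) * adjMultiplicity G r = -(k + s * (v - 1)) := by
  have htrace := trace_aeval_adjMatrix hG hsum hprod hvμ hrs (X - C s)
  rw [adjMultiplicity_degree_eq_one hG hsum hprod hvμ hrs] at htrace
  have hmul : -(s * v) = k - s + (r - s) * adjMultiplicity G r := by
    simpa [Algebra.algebraMap_eq_smul_one, Matrix.trace_one, hG.card] using htrace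
  linear_combination -hmul

theorem two_mul_adjMultiplicity :
    2 * (adjMultiplicity G r : K) = v - 1 + ((v - 1) * (μ - ℓ) - 2 * k) / (r - s) := by
  have hrs_sub : r - s ≠ 0 := sub_ne_zero.2 hrs
  field_simp
  linear_combination 2 * sub_mul_adjMultiplicity hG hsum hprod hvμ hrs - (v - 1) * hsum

theorem adjMultiplicity_ne_zero (hk : (k : K) ≠ 0) (hℓk : (ℓ : K) + 1 ≠ k) :
    adjMultiplicity G r ≠ 0 := by
  have hv : v ≠ 0 := by rintro rfl; simp at hvμ
  have hmul : (r - k) * ((r - s) * adjMultiplicity G r) = v * k * (s + 1) := by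
    rw [sub_mul_adjMultiplicity hG hsum hprod hvμ hrs]
    linear_combination degree_sub_mul_degree_sub hG hsum hprod hv - v * hprod
  have hroots : (r + 1) * (s + 1) = ℓ + 1 - k := by linear_combination hsum + hprod
  have hs : s + 1 ≠ 0 := right_ne_zero_of_mul (hroots ▸ sub_ne_zero.2 hℓk)
  intro hzero
  rw [hzero, Nat.cast_zero, mul_zero, mul_zero] at hmul
  exact mul_ne_zero (mul_ne_zero (left_ne_zero_of_mul hvμ) hk) hs hmul.symm

theorem hasEigenvalue_adjMatrix_iff (hk : (k : K) ≠ 0) (hℓk : (ℓ : K) + 1 ≠ k) (t : K) :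
    End.HasEigenvalue (Matrix.toLin' (G.adjMatrix K)) t ↔ t = k ∨ t = r ∨ t = s := by
  constructor
  · intro ht
    have hcubic : aeval (Matrix.toLin' (G.adjMatrix K))
        ((X - C (k : K)) * ((X - C r) * (X - C s))) = 0 := by
      rw [aeval_toLin', aeval_adjMatrix_cubic hG hsum hprod, map_zero]
    simpa [sub_eq_zero] using isRoot_of_hasEigenvalue_of_aeval_eq_zero ht hcubic
  · rintro (rfl | rfl | rfl) <;> apply hasEigenvalue_of_finrank_eigenspace_ne_zero
    · intro hzero
      have hone := adjMultiplicity_degree_eq_one hG hsum hprod hvμ hrs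
      rw [adjMultiplicity, hzero, Nat.cast_zero] at hone
      exact zero_ne_one hone
    · exact adjMultiplicity_ne_zero hG hsum hprod hvμ hrs hk hℓk
    · exact adjMultiplicity_ne_zero hG (add_comm r _ ▸ hsum) (mul_comm r _ ▸ hprod) hvμ
        hrs.symm hk hℓk

end StronglyRegularGraph

theorem discriminant_pos_of_add_one_lt {k ℓ : ℝ} (μ : ℝ) (hℓk : ℓ + 1 < k) :
    0 < (ℓ - μ) ^ 2 + 4 * (k - μ) := by
  calc
    0 < (ℓ - μ + 2) ^ 2 + 4 * (k - (ℓ + 1)) :=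
      add_pos_of_nonneg_of_pos (sq_nonneg _) (by linarith)
    _ = (ℓ - μ) ^ 2 + 4 * (k - μ) := by ring

theorem isAdjEigenvalue_iff_hasEigenvalue {V : Type*} [Fintype V] (G : SimpleGraph V) (t : ℝ) :
    IsAdjEigenvalue G t ↔ Module.End.HasEigenvalue (Matrix.toLin' (G.adjMatrix ℝ)) t := by
  constructor
  · rintro ⟨x, hx_ne, hx⟩
    exact Module.End.hasEigenvalue_of_hasEigenvector ⟨Module.End.mem_eigenspace_iff.2 hx, hx_ne⟩
  · intro ht
    obtain ⟨x, hx, hx_ne⟩ := ht.exists_hasEigenvector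
    exact ⟨x, hx_ne, Module.End.mem_eigenspace_iff.1 hx⟩

/-- A connected non-complete strongly regular graph with parameters
`(v, k, λ, μ)`, `μ > 0`, has exactly the eigenvalues `k`,
`r = (λ-μ+δ)/2` and `s = (λ-μ-δ)/2` where `δ = √((λ-μ)² + 4(k-μ))`, with
multiplicities `1`, `f = (v-1+Δ)/2` and `g = (v-1-Δ)/2` respectively, where
`Δ = ((v-1)(μ-λ) - 2k)/δ`. -/
theorem srg_eigenvalues_multiplicities {V : Type*} [Fintype V]
    (G : SimpleGraph V) (v k ℓ μ : ℕ)
    (hSRG : G.IsSRGWith v k ℓ μ) (hconn : G.Connected) (hnc : G ≠ ⊤) (hμ : 0 < μ)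
    (δ r s Δ f g : ℝ)
    (hδ : δ = Real.sqrt (((ℓ : ℝ) - μ) ^ 2 + 4 * ((k : ℝ) - μ)))
    (hr : r = (((ℓ : ℝ) - μ) + δ) / 2)
    (hs : s = (((ℓ : ℝ) - μ) - δ) / 2)
    (hΔ : Δ = (((v : ℝ) - 1) * ((μ : ℝ) - ℓ) - 2 * k) / δ)
    (hf : f = ((v : ℝ) - 1 + Δ) / 2)
    (hg : g = ((v : ℝ) - 1 - Δ) / 2) :
    (∀ t : ℝ, IsAdjEigenvalue G t ↔ t = (k : ℝ) ∨ t = r ∨ t = s) ∧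
    Module.finrank ℝ (adjEigenspace G (k : ℝ)) = 1 ∧
    (Module.finrank ℝ (adjEigenspace G r) : ℝ) = f ∧
    (Module.finrank ℝ (adjEigenspace G s) : ℝ) = g := by
  have hℓk := add_one_lt_degree_of_isSRGWith hSRG hnc hμ
  have hℓk_cast : (ℓ : ℝ) + 1 < k := by exact_mod_cast hℓk
  have hk : (k : ℝ) ≠ 0 := Nat.cast_ne_zero.2 (by lia)
  have hvμ : (v : ℝ) * μ ≠ 0 := by
    have := hconn.nonempty
    have hv : 0 < v := hSRG.card ▸ Fintype.card_pos
    positivity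
  have hdisc := discriminant_pos_of_add_one_lt (μ : ℝ) hℓk_cast
  have hδ_pos : 0 < δ := hδ ▸ Real.sqrt_pos.2 hdisc
  have hδ_sq : δ ^ 2 = ((ℓ : ℝ) - μ) ^ 2 + 4 * ((k : ℝ) - μ) := hδ ▸ Real.sq_sqrt hdisc.le
  have hsum : r + s = ℓ - μ := by linear_combination hr + hs
  have hsub : r - s = δ := by linear_combination hr - hs
  have hprod : r * s = μ - k := by rw [hr, hs]; linear_combination -hδ_sq / 4
  have hrs : r ≠ s := sub_ne_zero.1 (hsub ▸ hδ_pos.ne')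
  have hmult_r := two_mul_adjMultiplicity hSRG hsum hprod hvμ hrs
  have hmult_s := two_mul_adjMultiplicity hSRG (add_comm r s ▸ hsum) (mul_comm r s ▸ hprod)
    hvμ hrs.symm
  rw [hsub, ← hΔ] at hmult_r
  rw [← neg_sub r s, hsub, div_neg, ← hΔ] at hmult_s
  exact ⟨fun t ↦ (isAdjEigenvalue_iff_hasEigenvalue G t).trans
      (hasEigenvalue_adjMatrix_iff hSRG hsum hprod hvμ hrs hk hℓk_cast.ne t),
    Nat.cast_eq_one.1 (adjMultiplicity_degree_eq_one hSRG hsum hprod hvμ hrs),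
    by rw [hf, ← hmult_r, mul_div_cancel_left₀ _ two_ne_zero, adjMultiplicity, adjEigenspace],
    by rw [hg, sub_eq_add_neg, ← hmult_s, mul_div_cancel_left₀ _ two_ne_zero, adjMultiplicity,
      adjEigenspace]⟩
end

section
/- Let q ≥ 3 be an odd natural number and let G be a connected strongly regular graph with parameters (q^3, (q+1)(q^2−1)/2, (q+3)(q^2−3)/4 + 1, (q+1)(q^2−1)/4). Then the least eigenvalue of the real adjacency matrix of G equals −(q+1)/2, and the chromatic number of G is at least q^2. -/
open scoped Classical

/-!
If `r + s = ℓ - μ` and `r * s = μ - k`, the adjacency matrix of a strongly regular graph satisfies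
`(A - r) * (A - s) = μ • J`. So `k`, `r`, `s` are the only possible eigenvalues, and `A - r` sends
vectors with coordinate sum zero to eigenvectors for `s`. For the parameters at hand
`r = (q² - 1) / 2` and `s = -(q + 1) / 2`. The chromatic number is bounded by Hoffman's inequality
`1 - k / s ≤ χ`, whose left side is `q²`; it follows from evaluating the positive semidefinite form
`A - s` at the indicators of the colour classes, projected orthogonally to the all-ones vector.
-/

open Matrix

section Regular

variable {V R : Type*} [Fintype V] {G : SimpleGraph V} [DecidableRel G.Adj] {k : ℕ}

theorem adjMatrix_mulVec_one_of_isRegularOfDegree [NonAssocSemiring R]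
    (hreg : G.IsRegularOfDegree k) : G.adjMatrix R *ᵥ 1 = (k : R) • 1 :=
  funext fun v => by simp [hreg v]

theorem one_dotProduct_adjMatrix_mulVec_of_isRegularOfDegree [CommSemiring R]
    (hreg : G.IsRegularOfDegree k) (x : V → R) :
    1 ⬝ᵥ G.adjMatrix R *ᵥ x = k * (1 ⬝ᵥ x) := by
  rw [dotProduct_mulVec, ← mulVec_transpose, SimpleGraph.transpose_adjMatrix,
    adjMatrix_mulVec_one_of_isRegularOfDegree hreg, smul_dotProduct, smul_eq_mul]

end Regular

section StronglyRegular

variable {V R : Type*} [Fintype V] [DecidableEq V] {G : SimpleGraph V} [DecidableRel G.Adj]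
  [CommRing R] {n k ℓ μ : ℕ} {r s : R}

theorem adjMatrix_sub_smul_one_mul_adjMatrix_sub_smul_one (hSRG : G.IsSRGWith n k ℓ μ)
    (hadd : r + s = ℓ - μ) (hmul : r * s = μ - k) :
    (G.adjMatrix R - r • 1) * (G.adjMatrix R - s • 1) = (μ : R) • of 1 := by
  have compl_eq : Gᶜ.adjMatrix R = of 1 - 1 - G.adjMatrix R := by
    rw [← SimpleGraph.adjMatrix_completeGraph_eq_of_one_sub_one, eq_sub_iff_add_eq',
      SimpleGraph.IsCompl.adjMatrix_add_adjMatrix_eq_adjMatrix_completeGraph R isCompl_compl]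
  have sq_eq := hSRG.matrix_eq (α := R)
  simp only [compl_eq, ← Nat.cast_smul_eq_nsmul R] at sq_eq
  calc (G.adjMatrix R - r • 1) * (G.adjMatrix R - s • 1)
      = G.adjMatrix R ^ 2 - (r + s) • G.adjMatrix R + (r * s) • 1 := by
        simp only [sub_mul, mul_sub, smul_mul_assoc, mul_smul_comm, one_mul, mul_one, sq]
        module
    _ = (μ : R) • of 1 := by rw [sq_eq, hadd, hmul]; module

theorem adjMatrix_sub_smul_one_mulVec_mulVec_eq_zero (hSRG : G.IsSRGWith n k ℓ μ)
    (hadd : r + s = ℓ - μ) (hmul : r * s = μ - k) {x : V → R} (hx : 1 ⬝ᵥ x = 0) :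
    (G.adjMatrix R - r • 1) *ᵥ (G.adjMatrix R - s • 1) *ᵥ x = 0 := by
  have of_one_mulVec : (of 1 : Matrix V V R) *ᵥ x = 0 := funext fun _ => hx
  rw [mulVec_mulVec, adjMatrix_sub_smul_one_mul_adjMatrix_sub_smul_one hSRG hadd hmul,
    smul_mulVec, of_one_mulVec, smul_zero]

end StronglyRegular

section IndepSet

variable {V R : Type*} [Fintype V] {G : SimpleGraph V} [DecidableRel G.Adj]

theorem indicator_dotProduct_adjMatrix_mulVec_indicator_of_isIndepSet [NonAssocSemiring R]
    {S : Set V} (hS : G.IsIndepSet S) :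
    S.indicator 1 ⬝ᵥ G.adjMatrix R *ᵥ S.indicator 1 = 0 := by
  rw [SimpleGraph.dotProduct_mulVec_adjMatrix]
  refine Finset.sum_eq_zero fun v _ => Finset.sum_eq_zero fun w _ => ?_
  refine ite_eq_right_iff.mpr fun hvw => ?_
  by_cases hv : v ∈ S
  · have hw : w ∉ S := fun hw => hS hv hw hvw.ne hvw
    rw [Set.indicator_of_notMem hw, mul_zero]
  · rw [Set.indicator_of_notMem hv, zero_mul]

/-- The indicator of `S` projected orthogonally to the all-ones vector and multiplied by `|V|`, so
that no division is needed; the test vector in Hoffman's bound. -/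
noncomputable def scaledCenteredIndicator (R : Type*) [CommRing R] (S : Finset V) : V → R :=
  (Fintype.card V : R) • (S : Set V).indicator 1 - (S.card : R) • 1

theorem scaledCenteredIndicator_dotProduct_adjMatrix_sub_smul_one_mulVec [DecidableEq V]
    [CommRing R] {k : ℕ} (hreg : G.IsRegularOfDegree k) {S : Finset V} (hS : G.IsIndepSet S)
    (s : R) :
    scaledCenteredIndicator R S ⬝ᵥ (G.adjMatrix R - s • 1) *ᵥ scaledCenteredIndicator R S =
      Fintype.card V * S.card * (-s * Fintype.card V - S.card * (k - s)) := by
  let x : V → R := (S : Set V).indicator 1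
  have x_dot_x : x ⬝ᵥ x = S.card := by simp [x, dotProduct, Set.indicator_apply]
  have one_dot_x : 1 ⬝ᵥ x = S.card := by simp [x, dotProduct, Set.indicator_apply]
  have x_dot_one : x ⬝ᵥ 1 = S.card := by rw [dotProduct_comm, one_dot_x]
  have one_dot_one : (1 : V → R) ⬝ᵥ 1 = Fintype.card V := by simp [dotProduct]
  have x_dot_Ax : x ⬝ᵥ G.adjMatrix R *ᵥ x = 0 :=
    indicator_dotProduct_adjMatrix_mulVec_indicator_of_isIndepSet hS
  have y_eq : scaledCenteredIndicator R S = (Fintype.card V : R) • x - (S.card : R) • 1 := rfl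
  simp only [y_eq, sub_mulVec, mulVec_sub, mulVec_smul, smul_mulVec, one_mulVec, sub_dotProduct,
    dotProduct_sub, smul_dotProduct, dotProduct_smul, smul_eq_mul, x_dot_Ax, x_dot_x, one_dot_x,
    x_dot_one, one_dot_one, adjMatrix_mulVec_one_of_isRegularOfDegree hreg,
    one_dotProduct_adjMatrix_mulVec_of_isRegularOfDegree hreg]
  ring

end IndepSet

section Eigenvalues

variable {V : Type*} [Fintype V] {G : SimpleGraph V} {n k ℓ μ : ℕ} {r s t : ℝ}

theorem IsAdjEigenvalue.eq_or_eq_or_eq_of_isSRGWith (ht : IsAdjEigenvalue G t)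
    (hSRG : G.IsSRGWith n k ℓ μ) (hadd : r + s = ℓ - μ) (hmul : r * s = μ - k) :
    t = k ∨ t = r ∨ t = s := by
  obtain ⟨x, hx, hAx⟩ := ht
  have sub_mulVec_eq (a : ℝ) : (G.adjMatrix ℝ - a • 1) *ᵥ x = (t - a) • x := by
    rw [sub_mulVec, hAx, smul_mulVec, one_mulVec, sub_smul]
  have sum_eq : t * (1 ⬝ᵥ x) = k * (1 ⬝ᵥ x) := by
    rw [← one_dotProduct_adjMatrix_mulVec_of_isRegularOfDegree hSRG.regular, hAx,
      dotProduct_smul, smul_eq_mul]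
  refine (mul_eq_mul_right_iff.mp sum_eq).imp_right fun sum_eq_zero => ?_
  have annihilates := adjMatrix_sub_smul_one_mulVec_mulVec_eq_zero hSRG hadd hmul sum_eq_zero
  rw [sub_mulVec_eq, mulVec_smul, sub_mulVec_eq, smul_smul] at annihilates
  have root_eq : (t - s) * (t - r) = 0 := (smul_eq_zero.mp annihilates).resolve_right hx
  grind

theorem isAdjEigenvalue_of_isSRGWith [Nontrivial V] (hSRG : G.IsSRGWith n k ℓ μ)
    (hadd : r + s = ℓ - μ) (hmul : r * s = μ - k) (hr₀ : r ≠ 0) (hr₁ : r ≠ -1) :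
    IsAdjEigenvalue G s := by
  obtain ⟨a, b, hab⟩ := exists_pair_ne V
  let d : V → ℝ := Pi.single a 1 - Pi.single b 1
  have sum_eq_zero : 1 ⬝ᵥ d = 0 := by simp [d, dotProduct_sub]
  refine ⟨(G.adjMatrix ℝ - r • 1) *ᵥ d, fun h => ?_, ?_⟩
  · have apply_a : -r - G.adjMatrix ℝ a b = 0 := by
      simpa [d, mulVec_sub, sub_mulVec, hab] using congrFun h a
    rw [SimpleGraph.adjMatrix_apply] at apply_a
    grind
  · have annihilates := adjMatrix_sub_smul_one_mulVec_mulVec_eq_zero hSRG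
      ((add_comm s r).trans hadd) ((mul_comm s r).trans hmul) sum_eq_zero
    rwa [sub_mulVec, smul_mulVec, one_mulVec, sub_eq_zero] at annihilates

theorem isLeast_isAdjEigenvalue_of_isSRGWith [Nontrivial V] (hSRG : G.IsSRGWith n k ℓ μ)
    (hadd : r + s = ℓ - μ) (hmul : r * s = μ - k) (hr : 0 < r) (hs : s ≤ 0) :
    IsLeast {t | IsAdjEigenvalue G t} s := by
  refine ⟨isAdjEigenvalue_of_isSRGWith hSRG hadd hmul hr.ne' (by linarith), fun t ht => ?_⟩
  rcases ht.eq_or_eq_or_eq_of_isSRGWith hSRG hadd hmul with rfl | rfl | rfl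
  · exact hs.trans k.cast_nonneg
  · exact hs.trans hr.le
  · exact le_rfl

end Eigenvalues

section HoffmanBound

variable {V : Type*} [Fintype V] {G : SimpleGraph V} {k : ℕ} {s : ℝ}

theorem posSemidef_adjMatrix_sub_smul_one (hs : s ∈ lowerBounds {t | IsAdjEigenvalue G t}) :
    (G.adjMatrix ℝ - s • 1).PosSemidef := by
  have hermitian : (G.adjMatrix ℝ - s • 1).IsHermitian := by
    simp [IsHermitian, conjTranspose_eq_transpose_of_trivial]
  refine hermitian.posSemidef_iff_eigenvalues_nonneg.mpr fun i => ?_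
  have eigenvector := hermitian.mulVec_eigenvectorBasis i
  rw [sub_mulVec, smul_mulVec, one_mulVec, sub_eq_iff_eq_add, ← add_smul] at eigenvector
  have ne_zero : ⇑(hermitian.eigenvectorBasis i) ≠ 0 := fun h =>
    hermitian.eigenvectorBasis.toBasis.ne_zero i (by ext v; simpa using congrFun h v)
  exact le_add_iff_nonneg_left s |>.mp (hs ⟨_, ne_zero, eigenvector⟩)

theorem nonpos_of_mem_lowerBounds_isAdjEigenvalue [Nonempty V]
    (hs : s ∈ lowerBounds {t | IsAdjEigenvalue G t}) : s ≤ 0 := by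
  have := (posSemidef_adjMatrix_sub_smul_one hs).diag_nonneg (i := Classical.arbitrary V)
  simpa using this

theorem card_mul_sub_le_of_isIndepSet (hreg : G.IsRegularOfDegree k)
    (hs : s ∈ lowerBounds {t | IsAdjEigenvalue G t}) {S : Finset V} (hS : G.IsIndepSet S) :
    S.card * (k - s) ≤ -s * Fintype.card V := by
  rcases S.eq_empty_or_nonempty with rfl | hne
  · cases isEmpty_or_nonempty V
    · simp
    · have := nonpos_of_mem_lowerBounds_isAdjEigenvalue hs
      simpa using mul_nonpos_of_nonpos_of_nonneg this (Fintype.card V).cast_nonneg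
  · have quadratic_nonneg := (posSemidef_adjMatrix_sub_smul_one hs).re_dotProduct_nonneg
      (scaledCenteredIndicator ℝ S)
    rw [star_trivial, RCLike.re_to_real,
      scaledCenteredIndicator_dotProduct_adjMatrix_sub_smul_one_mulVec hreg hS] at quadratic_nonneg
    have card_mul_card_pos : (0 : ℝ) < Fintype.card V * S.card :=
      mod_cast Nat.mul_pos (hne.card_pos.trans_le S.card_le_univ) hne.card_pos
    exact sub_nonneg.mp (nonneg_of_mul_nonneg_right quadratic_nonneg card_mul_card_pos)

theorem sub_le_of_colorable [Nonempty V] (hreg : G.IsRegularOfDegree k)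
    (hs : s ∈ lowerBounds {t | IsAdjEigenvalue G t}) {m : ℕ} (hm : G.Colorable m) :
    k - s ≤ -s * m := by
  obtain ⟨C⟩ := hm
  have class_le (c : Fin m) :
      ((Finset.univ.filter (C · = c)).card : ℝ) * (k - s) ≤ -s * Fintype.card V :=
    card_mul_sub_le_of_isIndepSet hreg hs (by simpa using! C.isIndepSet_colorClass c)
  have card_eq : (Fintype.card V : ℝ) = ∑ c, ((Finset.univ.filter (C · = c)).card : ℝ) :=
    mod_cast Finset.card_eq_sum_card_fiberwise fun v _ => Finset.mem_univ (C v)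
  have card_pos : (0 : ℝ) < Fintype.card V := mod_cast Fintype.card_pos
  refine le_of_mul_le_mul_left ?_ card_pos
  calc Fintype.card V * (k - s)
      = ∑ c, ((Finset.univ.filter (C · = c)).card : ℝ) * (k - s) := by
        rw [← Finset.sum_mul, ← card_eq]
    _ ≤ ∑ _c : Fin m, -s * Fintype.card V := Finset.sum_le_sum fun c _ => class_le c
    _ = Fintype.card V * (-s * m) := by
        rw [Finset.sum_const, Finset.card_univ, Fintype.card_fin, nsmul_eq_mul]; ring

end HoffmanBound

section Parameters

variable {q : ℕ}

theorem cast_C20_degree (hodd : Odd q) :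
    (((q + 1) * (q ^ 2 - 1) / 2 : ℕ) : ℝ) = (q + 1) * (q ^ 2 - 1) / 2 := by
  have two_dvd : 2 ∣ (q + 1) * (q ^ 2 - 1) := dvd_mul_of_dvd_left hodd.add_one.two_dvd _
  rw [Nat.cast_div two_dvd (by norm_num), Nat.cast_mul, Nat.cast_sub (Nat.one_le_pow _ _ hodd.pos)]
  push_cast
  rfl

theorem cast_C20_mu (hodd : Odd q) :
    (((q + 1) * (q ^ 2 - 1) / 4 : ℕ) : ℝ) = (q + 1) * (q ^ 2 - 1) / 4 := by
  have four_dvd : 2 * 2 ∣ (q + 1) * (q ^ 2 - 1) :=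
    mul_dvd_mul hodd.add_one.two_dvd (Nat.Odd.sub_odd hodd.pow odd_one).two_dvd
  rw [Nat.cast_div four_dvd (by norm_num), Nat.cast_mul, Nat.cast_sub (Nat.one_le_pow _ _ hodd.pos)]
  push_cast
  rfl

theorem cast_C20_lambda (hq : 3 ≤ q) (hodd : Odd q) :
    (((q + 3) * (q ^ 2 - 3) / 4 + 1 : ℕ) : ℝ) = (q + 3) * (q ^ 2 - 3) / 4 + 1 := by
  have four_dvd : 2 * 2 ∣ (q + 3) * (q ^ 2 - 3) :=
    mul_dvd_mul (hodd.add_odd (by decide)).two_dvd (Nat.Odd.sub_odd hodd.pow (by decide)).two_dvd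
  rw [Nat.cast_add_one, Nat.cast_div four_dvd (by norm_num), Nat.cast_mul,
    Nat.cast_sub (by nlinarith)]
  push_cast
  rfl

end Parameters

/-- For odd `q ≥ 3`, a connected strongly regular graph with parameters
`(q³, (q+1)(q²-1)/2, (q+3)(q²-3)/4 + 1, (q+1)(q²-1)/4)` (the complements of
Hubaut's C20 family) has least adjacency eigenvalue `-(q+1)/2` and chromatic
number at least `q²`. -/
theorem hubaut_C20_least_eigenvalue_chromatic {V : Type*} [Fintype V]
    (G : SimpleGraph V) (q : ℕ) (hq : 3 ≤ q) (hodd : Odd q)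
    (hconn : G.Connected)
    (hSRG : G.IsSRGWith (q ^ 3) ((q + 1) * (q ^ 2 - 1) / 2)
      ((q + 3) * (q ^ 2 - 3) / 4 + 1) ((q + 1) * (q ^ 2 - 1) / 4)) :
    (IsAdjEigenvalue G (-(((q : ℝ) + 1) / 2)) ∧
      ∀ t : ℝ, IsAdjEigenvalue G t → -(((q : ℝ) + 1) / 2) ≤ t) ∧
    ((q ^ 2 : ℕ) : ℕ∞) ≤ G.chromaticNumber := by
  have three_le_q : (3 : ℝ) ≤ q := mod_cast hq
  have : Nontrivial V := Fintype.one_lt_card_iff_nontrivial.mp <|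
    hSRG.card ▸ Nat.one_lt_pow three_ne_zero (by lia)
  have hleast : IsLeast {t | IsAdjEigenvalue G t} (-(((q : ℝ) + 1) / 2)) := by
    refine isLeast_isAdjEigenvalue_of_isSRGWith (r := ((q : ℝ) ^ 2 - 1) / 2) hSRG ?_ ?_
      (by nlinarith) (by linarith)
    · rw [cast_C20_lambda hq hodd, cast_C20_mu hodd]; ring
    · rw [cast_C20_mu hodd, cast_C20_degree hodd]; ring
  refine ⟨⟨hleast.1, fun t ht => hleast.2 ht⟩,
    SimpleGraph.le_chromaticNumber_iff_colorable.mpr fun m hm => ?_⟩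
  have hoffman := sub_le_of_colorable hSRG.regular hleast.2 hm
  rw [cast_C20_degree hodd] at hoffman
  have scaled_le : ((q : ℝ) + 1) / 2 * q ^ 2 ≤ (q + 1) / 2 * m := by linarith
  exact_mod_cast le_of_mul_le_mul_left scaled_le (by positivity)
end
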